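/- arXiv:2301.11571 — 4 statements merged into one kernel-verified Lean document; each statement's English description precedes it below -/
import Mathlib

section
/- Let n ≥ 2 and r be positive integers with r ≥ 40·log₂(n). Let A be a random r×n matrix whose entries are i.i.d. uniform in {−1,1}. Then with probability at least 1 − 2^{−0.01r} over A, the following holds: for every w ∈ ℝ^n with ‖w‖₁ = 1, the vector Aw has at least r/10 entries i with (Aw)_i < 14·√(log₂(n)/r). -/
open MeasureTheory

/-!
Fix a row `a` with entries in `[-1, 1]` and a vector `w` with `‖w‖₁ = 1`. Draw `k` column indices
independently, taking `j` with probability `|w j|`, and add up the sampled entries of `a`, each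
multiplied by the sign of `w j`. The expected value of the sum is `k ⟨a, w⟩`, so if `⟨a, w⟩ ≥ t`
then by Hoeffding the sum is nonpositive with probability at most `exp (-k t² / 2)`. Averaging over
the rows, some signed sample of `k` columns has a nonpositive sum on hardly more rows than those
with `⟨a, w⟩ < t`.

For one fixed signed sample, symmetry makes each sum nonpositive with probability at least `1/2`,
and by Hoeffding over the independent rows it is exponentially unlikely that markedly fewer than
half of the sums are nonpositive. There are at most `(3n)ᵏ` signed samples, so a union bound
concludes, with `k` about `r / (10 log₂ n)`. If `14 √(log₂ n / r) > 1`, every row qualifies, since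
`⟨a, w⟩ ≤ ‖w‖₁`.
-/

open ProbabilityTheory Set
open Fintype (card)
open scoped Matrix

theorem ncard_setOf_eq_sum_indicator {ι β : Type*} [Fintype ι] (s : Set β) (y : ι → β) :
    ({i | y i ∈ s}.ncard : ℝ) = ∑ i, s.indicator 1 (y i) := by
  classical
  simp [indicator_apply, ncard_eq_toFinset_card']

section Hoeffding

variable {Ω ι : Type*} [MeasurableSpace Ω] {μ : Measure Ω} [IsProbabilityMeasure μ] [Fintype ι]

theorem measureReal_sum_le_card_mul_sub_le {X : ι → Ω → ℝ} {a b m ε : ℝ} (hX : iIndepFun X μ)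
    (hXm : ∀ i, AEMeasurable (X i) μ) (hab : ∀ i, ∀ᵐ ω ∂μ, X i ω ∈ Icc a b)
    (hm : ∀ i, m ≤ μ[X i]) (hε : 0 ≤ ε) :
    μ.real {ω | ∑ i, X i ω ≤ card ι * (m - ε)} ≤
      Real.exp (-(2 * card ι * ε ^ 2 / (b - a) ^ 2)) := by
  have hindep : iIndepFun (fun i ω ↦ -(X i ω - μ[X i])) μ :=
    hX.comp (fun i x ↦ -(x - ∫ ω, X i ω ∂μ)) fun i ↦ by fun_prop
  have hsubG (i : ι) := (hasSubgaussianMGF_of_mem_Icc (hXm i) (hab i)).neg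
  calc μ.real {ω | ∑ i, X i ω ≤ card ι * (m - ε)}
      ≤ μ.real {ω | card ι * ε ≤ ∑ i, -(X i ω - μ[X i])} := by
        refine measureReal_mono fun ω hω ↦ ?_
        have hsum : card ι * m ≤ ∑ i, μ[X i] := by
          simpa using Finset.card_nsmul_le_sum Finset.univ (fun i ↦ μ[X i]) m fun i _ ↦ hm i
        simp only [mem_ofPred_eq, Finset.sum_neg_distrib, Finset.sum_sub_distrib] at hω ⊢
        linarith
    _ ≤ Real.exp (-(card ι * ε) ^ 2 / (2 * (∑ _i : ι, (‖b - a‖₊ / 2) ^ 2 : NNReal))) :=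
        HasSubgaussianMGF.measure_sum_ge_le_of_iIndepFun hindep (fun i _ ↦ hsubG i)
          (by positivity)
    _ = Real.exp (-(2 * card ι * ε ^ 2 / (b - a) ^ 2)) := by
        congr 1
        simp only [Finset.sum_const, Finset.card_univ, nsmul_eq_mul, NNReal.coe_mul,
          NNReal.coe_natCast, NNReal.coe_pow, NNReal.coe_div, NNReal.coe_ofNat, coe_nnnorm,
          Real.norm_eq_abs, div_pow, sq_abs]
        rcases eq_or_ne (card ι : ℝ) 0 with hι | hι
        · simp [hι]
        rcases eq_or_ne (b - a) 0 with hba | hba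
        · simp [hba]
        field_simp

theorem half_le_measureReal_nonpos {Y : Ω → ℝ} (hY : IdentDistrib Y (-Y) μ μ) :
    1 / 2 ≤ μ.real {ω | Y ω ≤ 0} := by
  have hsymm : μ.real {ω | Y ω ≤ 0} = μ.real {ω | -Y ω ≤ 0} :=
    congrArg ENNReal.toReal (hY.measure_mem_eq measurableSet_Iic)
  have hcover : {ω | Y ω ≤ 0} ∪ {ω | -Y ω ≤ 0} = univ := by
    ext ω
    simpa using le_total (Y ω) 0
  have hunion := measureReal_union_le (μ := μ) {ω | Y ω ≤ 0} {ω | -Y ω ≤ 0}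
  rw [hcover, probReal_univ] at hunion
  linarith

theorem measureReal_ncard_nonpos_le {Y : ι → Ω → ℝ} {ε : ℝ} (hY : iIndepFun Y μ)
    (hsymm : ∀ i, IdentDistrib (Y i) (-Y i) μ μ) (hε : 0 ≤ ε) :
    μ.real {ω | ({i | Y i ω ≤ 0}.ncard : ℝ) ≤ card ι * (1 / 2 - ε)} ≤
      Real.exp (-(2 * card ι * ε ^ 2)) := by
  let g : ℝ → ℝ := (Iic 0).indicator 1
  have hg : Measurable g := measurable_one.indicator measurableSet_Iic
  have hmean (i : ι) : 1 / 2 ≤ μ[g ∘ Y i] := by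
    have hnull : NullMeasurableSet (Y i ⁻¹' Iic 0) μ :=
      (hsymm i).aemeasurable_fst.nullMeasurableSet_preimage measurableSet_Iic
    calc (1 : ℝ) / 2 ≤ μ.real (Y i ⁻¹' Iic 0) := half_le_measureReal_nonpos (hsymm i)
      _ = μ[(Y i ⁻¹' Iic 0).indicator 1] := by
        rw [integral_indicator₀ hnull]
        simp
      _ = μ[g ∘ Y i] := rfl
  have hmem (x : ℝ) : g x ∈ Icc (0 : ℝ) 1 :=
    ⟨indicator_nonneg (fun _ _ ↦ zero_le_one) x, indicator_le_self' (fun _ _ ↦ zero_le_one) x⟩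
  have htail := measureReal_sum_le_card_mul_sub_le (hY.comp (fun _ ↦ g) fun _ ↦ hg)
    (fun i ↦ hg.comp_aemeasurable (hsymm i).aemeasurable_fst)
    (fun i ↦ ae_of_all μ fun ω ↦ hmem (Y i ω)) hmean hε
  simpa only [sub_zero, one_pow, div_one, g, Function.comp_apply, ← ncard_setOf_eq_sum_indicator,
    mem_Iic] using htail

end Hoeffding

section SignedSamples

variable {ι κ σ : Type*} [Fintype ι] [Fintype σ]

/-- The value on the row `a` of a signed sample of columns: the sum of the sampled entries of `a`,
each multiplied by its prescribed sign. Signed samples form a finite family, over which a union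
bound can be taken, and replace the continuum of weight vectors `w`. -/
def signedSampleSum (f : σ → κ × SignType) (a : κ → ℝ) : ℝ :=
  ∑ s, (f s).2 * a (f s).1

theorem signedSampleSum_neg (f : σ → κ × SignType) (a : κ → ℝ) :
    signedSampleSum f (-a) = -signedSampleSum f a := by
  simp [signedSampleSum]

theorem measurable_signedSampleSum (f : σ → κ × SignType) : Measurable (signedSampleSum f) := by
  unfold signedSampleSum
  fun_prop

variable [Fintype κ]

/-- The distribution on columns that picks `j` with probability `|w j|`, for sampling a vector of
unit `ℓ¹` norm; the sign of `w j` is attached to the sample afterwards. -/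
noncomputable def absPMF (w : κ → ℝ) (hw : ∑ j, |w j| = 1) : PMF κ :=
  PMF.ofFintype (fun j ↦ ENNReal.ofReal |w j|) <| by
    rw [← ENNReal.ofReal_sum_of_nonneg fun j _ ↦ abs_nonneg (w j), hw, ENNReal.ofReal_one]

theorem integral_absPMF [MeasurableSpace κ] [MeasurableSingletonClass κ] {w : κ → ℝ}
    (hw : ∑ j, |w j| = 1) (g : κ → ℝ) :
    ∫ j, g j ∂(absPMF w hw).toMeasure = ∑ j, |w j| * g j := by
  simp [PMF.integral_eq_sum, absPMF]

theorem pi_absPMF_signedSampleSum_nonpos_le [MeasurableSpace κ] [DiscreteMeasurableSpace κ]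
    {w a : κ → ℝ} {t : ℝ} (hw : ∑ j, |w j| = 1) (ha : ∀ j, |a j| ≤ 1) (ht : 0 ≤ t)
    (haw : t ≤ a ⬝ᵥ w) :
    (Measure.pi fun _ : σ ↦ (absPMF w hw).toMeasure).real
        {c | signedSampleSum (fun s ↦ (c s, SignType.sign (w (c s)))) a ≤ 0} ≤
      Real.exp (-(card σ * t ^ 2 / 2)) := by
  let g : κ → ℝ := fun j ↦ SignType.sign (w j) * a j
  have hmeas : Measurable g := .of_discrete
  have hmem (j : κ) : g j ∈ Icc (-1 : ℝ) 1 := by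
    rw [mem_Icc, ← abs_le, abs_mul]
    have hsign : |(SignType.sign (w j) : ℝ)| ≤ 1 := by cases SignType.sign (w j) <;> simp
    exact mul_le_one₀ hsign (abs_nonneg _) (ha j)
  have hmean (s : σ) : t ≤ ∫ c, g (c s) ∂Measure.pi fun _ : σ ↦ (absPMF w hw).toMeasure := by
    rw [integral_comp_eval hmeas.aestronglyMeasurable, integral_absPMF]
    simpa only [g, ← mul_assoc, abs_mul_sign, dotProduct, mul_comm (a _)] using haw
  have htail := measureReal_sum_le_card_mul_sub_le
    (iIndepFun_pi fun _ : σ ↦ hmeas.aemeasurable)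
    (fun s ↦ (hmeas.comp (measurable_pi_apply s)).aemeasurable)
    (fun s ↦ ae_of_all _ fun c ↦ hmem (c s)) hmean ht
  rw [sub_self, mul_zero] at htail
  refine htail.trans_eq (congrArg Real.exp ?_)
  ring

variable (σ) in
theorem exists_ncard_signedSampleSum_nonpos_le {a : ι → κ → ℝ} {w : κ → ℝ} {t : ℝ}
    (ha : ∀ i j, |a i j| ≤ 1) (hw : ∑ j, |w j| = 1) (ht : 0 ≤ t) :
    ∃ f : σ → κ × SignType, ({i | signedSampleSum f (a i) ≤ 0}.ncard : ℝ) ≤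
      ({i | a i ⬝ᵥ w < t}.ncard : ℝ) + card ι * Real.exp (-(card σ * t ^ 2 / 2)) := by
  let _ : MeasurableSpace κ := ⊤
  let P := Measure.pi fun _ : σ ↦ (absPMF w hw).toMeasure
  let S (c : σ → κ) (i : ι) : ℝ := signedSampleSum (fun s ↦ (c s, SignType.sign (w (c s)))) (a i)
  let δ := Real.exp (-(card σ * t ^ 2 / 2))
  have hrow (i : ι) : P.real {c | S c i ≤ 0} ≤ (Iio t).indicator 1 (a i ⬝ᵥ w) + δ := by
    by_cases hi : a i ⬝ᵥ w < t
    · rw [indicator_of_mem (mem_Iio.2 hi), Pi.one_apply]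
      exact measureReal_le_one.trans (le_add_of_nonneg_right (Real.exp_nonneg _))
    · rw [indicator_of_notMem (by simpa using hi), zero_add]
      exact pi_absPMF_signedSampleSum_nonpos_le hw (ha i) ht (not_lt.1 hi)
  have hmean : ∫ c, ({i | S c i ≤ 0}.ncard : ℝ) ∂P ≤ ({i | a i ⬝ᵥ w < t}.ncard : ℝ) + card ι * δ :=
    calc ∫ c, ({i | S c i ≤ 0}.ncard : ℝ) ∂P
        = ∑ i, P.real {c | S c i ≤ 0} := by
          simp_rw [← mem_Iic (b := (0 : ℝ)), ncard_setOf_eq_sum_indicator]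
          rw [integral_finsetSum _ fun _ _ ↦ .of_finite]
          exact Finset.sum_congr rfl fun i _ ↦
            integral_indicator_one (s := {c | S c i ≤ 0}) .of_discrete
      _ ≤ ∑ i, ((Iio t).indicator 1 (a i ⬝ᵥ w) + δ) := Finset.sum_le_sum fun i _ ↦ hrow i
      _ = ({i | a i ⬝ᵥ w < t}.ncard : ℝ) + card ι * δ := by
          rw [Finset.sum_add_distrib, ← ncard_setOf_eq_sum_indicator]
          simp
  obtain ⟨c, hc⟩ := exists_le_integral (μ := P) (f := fun c ↦ ({i | S c i ≤ 0}.ncard : ℝ))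
    .of_finite
  exact ⟨_, hc.trans hmean⟩

end SignedSamples

section RandomMatrix

variable {Ω ι κ : Type*} [MeasurableSpace Ω] {μ : Measure Ω} [IsProbabilityMeasure μ]
  [Fintype ι] [Fintype κ] {X : ι → Ω → κ → ℝ}

theorem measureReal_exists_ncard_dotProduct_lt_le {t ε : ℝ} (hX : iIndepFun X μ)
    (hsymm : ∀ i, IdentDistrib (X i) (-X i) μ μ) (hbdd : ∀ᵐ ω ∂μ, ∀ i j, |X i ω j| ≤ 1)
    (ht : 0 ≤ t) (hε : 0 ≤ ε) (k : ℕ) :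
    μ.real {ω | ∃ w : κ → ℝ, ∑ j, |w j| = 1 ∧ ({i | X i ω ⬝ᵥ w < t}.ncard : ℝ) ≤
        card ι * (1 / 2 - ε - Real.exp (-(k * t ^ 2 / 2)))} ≤
      (3 * card κ) ^ k * Real.exp (-(2 * card ι * ε ^ 2)) := by
  let few (f : Fin k → κ × SignType) : Set Ω :=
    {ω | ({i | signedSampleSum f (X i ω) ≤ 0}.ncard : ℝ) ≤ card ι * (1 / 2 - ε)}
  have hfew (f) : μ.real (few f) ≤ Real.exp (-(2 * card ι * ε ^ 2)) := by
    refine measureReal_ncard_nonpos_le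
      (hX.comp (fun _ ↦ signedSampleSum f) fun _ ↦ measurable_signedSampleSum f) (fun i ↦ ?_) hε
    have hneg : signedSampleSum f ∘ (-X i) = -(signedSampleSum f ∘ X i) :=
      funext fun ω ↦ signedSampleSum_neg f (X i ω)
    exact hneg ▸ (hsymm i).comp (measurable_signedSampleSum f)
  calc _ ≤ μ.real (⋃ f, few f) := by
        refine ENNReal.toReal_mono (measure_ne_top _ _) (measure_mono_ae ?_)
        filter_upwards [hbdd] with ω hω
        rintro ⟨w, hw, hcount⟩
        obtain ⟨f, hf⟩ := exists_ncard_signedSampleSum_nonpos_le (Fin k) hω hw ht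
        rw [Fintype.card_fin] at hf
        exact mem_iUnion.2 ⟨f, hf.trans (by linarith)⟩
    _ ≤ ∑ f, μ.real (few f) := measureReal_iUnion_fintype_le few
    _ ≤ ∑ _f : Fin k → κ × SignType, Real.exp (-(2 * card ι * ε ^ 2)) :=
        Finset.sum_le_sum fun f _ ↦ hfew f
    _ = (3 * card κ) ^ k * Real.exp (-(2 * card ι * ε ^ 2)) := by
        have hcard : card SignType = 3 := rfl
        simp [hcard, mul_comm]

theorem dotProduct_le_sum_abs {a : κ → ℝ} (ha : ∀ j, |a j| ≤ 1) (w : κ → ℝ) :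
    a ⬝ᵥ w ≤ ∑ j, |w j| :=
  Finset.sum_le_sum fun j _ ↦ (le_abs_self _).trans <| by
    rw [abs_mul]
    exact mul_le_of_le_one_left (abs_nonneg _) (ha j)

theorem ofReal_one_sub_le_measure {s : Set Ω} {p : ℝ} (hp : μ.real sᶜ ≤ p) :
    ENNReal.ofReal (1 - p) ≤ μ s := by
  have hunion := measureReal_union_le (μ := μ) s sᶜ
  rw [union_compl_self, probReal_univ] at hunion
  rw [← ofReal_measureReal (μ := μ) (s := s)]
  exact ENNReal.ofReal_le_ofReal (by linarith)

end RandomMatrix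

section Parameters

theorem exp_neg_floor_mul_sq_div_two_le {r L : ℝ} (hr : 0 < r) (hL : 0 < L)
    (ht : 14 * √(L / r) ≤ 1) :
    Real.exp (-(⌊r / (10 * L)⌋₊ * (14 * √(L / r)) ^ 2 / 2)) ≤ 0.02 := by
  have ht_sq : (14 * √(L / r)) ^ 2 = 196 * (L / r) := by
    rw [mul_pow, Real.sq_sqrt (by positivity)]
    norm_num
  have ht_sq_le : 196 * (L / r) ≤ 1 := ht_sq ▸ pow_le_one₀ (by positivity) ht
  have hfloor : r / (10 * L) - 1 ≤ ⌊r / (10 * L)⌋₊ := (Nat.sub_one_lt_floor _).le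
  have hexponent : 9 ≤ ⌊r / (10 * L)⌋₊ * (14 * √(L / r)) ^ 2 / 2 :=
    calc (9 : ℝ) ≤ (r / (10 * L) - 1) * (196 * (L / r)) / 2 := by
          have : r / (10 * L) * (196 * (L / r)) = 19.6 := by field_simp; norm_num
          linarith
      _ ≤ ⌊r / (10 * L)⌋₊ * (14 * √(L / r)) ^ 2 / 2 := by
          rw [ht_sq]
          gcongr
  calc Real.exp (-(⌊r / (10 * L)⌋₊ * (14 * √(L / r)) ^ 2 / 2))
      ≤ Real.exp ((9 : ℕ) * -1) := Real.exp_le_exp.2 (by push_cast; linarith)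
    _ = Real.exp (-1) ^ 9 := Real.exp_nat_mul _ _
    _ ≤ (1 / 2) ^ 9 := by gcongr; exact Real.exp_neg_one_lt_half.le
    _ ≤ 0.02 := by norm_num

theorem three_mul_pow_floor_mul_exp_le {n r : ℕ} (hn : 2 ≤ n) :
    (3 * n : ℝ) ^ ⌊r / (10 * Real.logb 2 n)⌋₊ * Real.exp (-(2 * r * 0.38 ^ 2)) ≤
      2 ^ (-(0.01 : ℝ) * r) := by
  set L := Real.logb 2 n
  set k := ⌊r / (10 * L)⌋₊
  have hn' : (2 : ℝ) ≤ n := by exact_mod_cast hn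
  have hL : 0 < L := Real.logb_pos (by norm_num) (by linarith)
  have hk : k * (10 * L) ≤ r := (le_div_iff₀ (by positivity)).1 (Nat.floor_le (by positivity))
  have hpow : (3 * n : ℝ) ^ k ≤ 2 ^ (0.3 * r : ℝ) :=
    calc (3 * n : ℝ) ^ k ≤ ((n : ℝ) ^ 3) ^ k := by
          have : (3 : ℝ) ≤ n ^ 2 := by nlinarith
          rw [pow_succ (n : ℝ) 2]
          gcongr
      _ = 2 ^ (L * (3 : ℕ) * k) := by
          rw [Real.rpow_mul_natCast two_pos.le, Real.rpow_mul_natCast two_pos.le,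
            Real.rpow_logb two_pos (by norm_num) (by linarith)]
      _ ≤ 2 ^ (0.3 * r : ℝ) := by
          refine Real.rpow_le_rpow_of_exponent_le one_le_two ?_
          push_cast
          linarith
  have hexp : Real.exp (-(2 * r * 0.38 ^ 2)) ≤ 2 ^ (-(0.31 : ℝ) * r) := by
    rw [Real.rpow_def_of_pos two_pos]
    refine Real.exp_le_exp.2 ?_
    nlinarith [Real.log_two_lt_d9, (Nat.cast_nonneg r : (0 : ℝ) ≤ r)]
  calc (3 * n : ℝ) ^ k * Real.exp (-(2 * r * 0.38 ^ 2))
      ≤ 2 ^ (0.3 * r : ℝ) * 2 ^ (-(0.31 : ℝ) * r) := by gcongr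
    _ = 2 ^ (-(0.01 : ℝ) * r) := by
        rw [← Real.rpow_add two_pos]
        congr 1
        ring

end Parameters

theorem adaboost_random_matrix_lemma_general {Ω ι κ : Type*} [MeasurableSpace Ω] {μ : Measure Ω}
    [IsProbabilityMeasure μ] [Fintype ι] [Nonempty ι] [Fintype κ] {X : ι → Ω → κ → ℝ}
    (hX : iIndepFun X μ) (hsymm : ∀ i, IdentDistrib (X i) (-X i) μ μ)
    (hbdd : ∀ᵐ ω ∂μ, ∀ i j, |X i ω j| ≤ 1) (hκ : 2 ≤ card κ) :
    ENNReal.ofReal (1 - (2 : ℝ) ^ (-(0.01 : ℝ) * card ι)) ≤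
      μ {ω | ∀ w : κ → ℝ, ∑ j, |w j| = 1 → (card ι : ℝ) / 10 ≤
        ({i | X i ω ⬝ᵥ w < 14 * √(Real.logb 2 (card κ) / card ι)}.ncard : ℝ)} := by
  set L := Real.logb 2 (card κ)
  set t := 14 * √(L / card ι)
  have hL : 0 < L := Real.logb_pos (by norm_num) (by exact_mod_cast hκ)
  have hι : (0 : ℝ) < card ι := by exact_mod_cast Fintype.card_pos
  refine ofReal_one_sub_le_measure ?_
  rcases lt_or_ge 1 t with ht | ht
  · suffices hgood : ∀ᵐ ω ∂μ, ∀ w : κ → ℝ, ∑ j, |w j| = 1 →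
        (card ι : ℝ) / 10 ≤ ({i | X i ω ⬝ᵥ w < t}.ncard : ℝ) by
      rw [measureReal_def, compl_ofPred, ae_iff.1 hgood]
      positivity
    filter_upwards [hbdd] with ω hω w hw
    have huniv : {i | X i ω ⬝ᵥ w < t} = univ :=
      eq_univ_of_forall fun i ↦ ((dotProduct_le_sum_abs (hω i) w).trans_eq hw).trans_lt ht
    rw [huniv, ncard_univ, Nat.card_eq_fintype_card]
    linarith
  · have hδ := exp_neg_floor_mul_sq_div_two_le hι hL ht
    refine le_trans (measureReal_mono fun ω hω ↦ ?_)
      ((measureReal_exists_ncard_dotProduct_lt_le hX hsymm hbdd (t := t) (by positivity)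
        (by norm_num) ⌊card ι / (10 * L)⌋₊).trans (three_mul_pow_floor_mul_exp_le hκ))
    obtain ⟨w, hw, hcount⟩ : ∃ w : κ → ℝ, ∑ j, |w j| = 1 ∧
        ({i | X i ω ⬝ᵥ w < t}.ncard : ℝ) < card ι / 10 := by simpa using hω
    refine ⟨w, hw, hcount.le.trans ?_⟩
    -- The deviation `0.38` leaves room for the sampling error: `1 / 10 = 1 / 2 - 0.38 - 0.02`.
    rw [div_eq_mul_one_div]
    gcongr
    linarith

section Uniform

variable {α β : Type*} [Fintype α] [Nonempty α] [MeasurableSpace α] [MeasurableSingletonClass α]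
  [MeasurableSpace β]

theorem toMeasure_uniformOfFintype_pi {ι : Type*} [Fintype ι] [DecidableEq ι] :
    (PMF.uniformOfFintype (ι → α)).toMeasure =
      Measure.pi fun _ ↦ (PMF.uniformOfFintype α).toMeasure := by
  refine Measure.ext_of_singleton fun A ↦ ?_
  simp only [Measure.pi_singleton, PMF.toMeasure_apply_singleton, MeasurableSet.singleton,
    PMF.uniformOfFintype_apply]
  simp [ENNReal.inv_pow]

theorem iIndepFun_eval_uniformOfFintype {ι : Type*} [Fintype ι] [DecidableEq ι] (g : α → β) :
    iIndepFun (fun i A ↦ g (A i)) (PMF.uniformOfFintype (ι → α)).toMeasure := by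
  rw [toMeasure_uniformOfFintype_pi]
  exact iIndepFun_pi fun _ ↦ (measurable_of_finite g).aemeasurable

theorem identDistrib_comp_equiv_uniformOfFintype (e : α ≃ α) (g : α → β) :
    IdentDistrib g (g ∘ e) (PMF.uniformOfFintype α).toMeasure
      (PMF.uniformOfFintype α).toMeasure := by
  have he : (PMF.uniformOfFintype α).toMeasure.map e = (PMF.uniformOfFintype α).toMeasure := by
    refine Measure.ext_of_singleton fun a ↦ ?_
    rw [Measure.map_apply (measurable_of_finite e) (measurableSet_singleton a),
      ← e.image_symm_eq_preimage, image_singleton]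
    simp only [PMF.toMeasure_apply_singleton, MeasurableSet.singleton, PMF.uniformOfFintype_apply]
  refine ⟨(measurable_of_finite g).aemeasurable, (measurable_of_finite _).aemeasurable, ?_⟩
  rw [← Measure.map_map (measurable_of_finite g) (measurable_of_finite e), he]

end Uniform

section SignMatrix

variable {ι κ : Type*}

/-- The `i`-th row of the sign matrix encoded by `A`, with `true ↦ 1` and `false ↦ -1`. The matrix
comes second, so that `signRow i` is a random vector on the space of matrices. -/
def signRow (i : ι) (A : ι → κ → Bool) : κ → ℝ :=
  fun j ↦ if A i j then 1 else -1

theorem abs_signRow (i : ι) (A : ι → κ → Bool) (j : κ) : |signRow i A j| = 1 := by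
  unfold signRow
  split_ifs <;> simp

variable [Fintype ι] [DecidableEq ι] [Fintype κ] [DecidableEq κ]

theorem iIndepFun_signRow :
    iIndepFun (signRow (ι := ι) (κ := κ)) (PMF.uniformOfFintype (ι → κ → Bool)).toMeasure :=
  iIndepFun_eval_uniformOfFintype fun (a : κ → Bool) j ↦ if a j then (1 : ℝ) else -1

theorem identDistrib_signRow_neg (i : ι) :
    IdentDistrib (signRow (κ := κ) i) (-signRow i)
      (PMF.uniformOfFintype (ι → κ → Bool)).toMeasure
      (PMF.uniformOfFintype (ι → κ → Bool)).toMeasure := by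
  let flip : (ι → κ → Bool) ≃ (ι → κ → Bool) :=
    .piCongrRight fun _ ↦ .piCongrRight fun _ ↦ .boolNot
  have hflip : signRow i ∘ flip = -signRow i := by
    ext A j
    cases hA : A i j <;> simp [signRow, flip, hA]
  exact hflip ▸ identDistrib_comp_equiv_uniformOfFintype flip (signRow i)

end SignMatrix

/-- For a random `r × n` matrix with i.i.d. uniform `±1` entries
(`true ↦ 1`, `false ↦ -1`), with probability at least `1 - 2^(-0.01 r)`, every
`w` with `‖w‖₁ = 1` has at least `r/10` coordinates `i` with
`(Aw)_i < 14·√(log₂ n / r)`. -/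
theorem adaboost_random_matrix_lemma
    (n r : ℕ) (hn : 2 ≤ n) (hr : 0 < r) (hrn : 40 * Real.logb 2 n ≤ (r : ℝ)) :
    ENNReal.ofReal (1 - (2 : ℝ) ^ (-(0.01 : ℝ) * r)) ≤
      (PMF.uniformOfFintype (Fin r → Fin n → Bool)).toMeasure
        {A | ∀ w : Fin n → ℝ, ∑ j, |w j| = 1 →
          (r : ℝ) / 10 ≤
            (({i : Fin r | ∑ j, (if A i j then (1 : ℝ) else -1) * w j <
              14 * Real.sqrt (Real.logb 2 n / r)}).ncard : ℝ)} := by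
  have : Nonempty (Fin r) := Fin.pos_iff_nonempty.1 hr
  simpa only [Fintype.card_fin, dotProduct, signRow] using adaboost_random_matrix_lemma_general
    (X := signRow (ι := Fin r) (κ := Fin n)) iIndepFun_signRow identDistrib_signRow_neg
    (ae_of_all _ fun A i j ↦ (abs_signRow i A j).le) (by rwa [Fintype.card_fin])
end

section
/- There exist universal constants c₀, c₁ ∈ (0,1] and c₂ ≥ 1 with the following property. Let u be a positive integer, let r, r₁ be positive reals with r₁ = α²·r for some α ≥ 1 and r₁ ≤ u, and let γ > 0 satisfy γ ≤ c₀/(2α). Let D be a probability distribution on {1,…,u} satisfying ∑_{i ≤ u−r₁, i ∈ supp(D)} D(i) ≤ 1/2 + γ, and suppose the set {1,…,u−r₁} \ supp(D) has at least r elements; let F_r denote its r smallest elements. If h is a uniformly random vector in {−1,1}^u (i.i.d. uniform entries), then ℙ[ ∑_{i ∈ supp(D)} D(i)·h(i) ≥ 2γ and #{i ∈ F_r : h(i) = −1} ≥ (1/2 + αγ/2)·r ] ≥ (c₁²/2)·exp(−8·c₂·γ²·r₁). -/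
open MeasureTheory

/-- The sign `±1` associated with a Boolean (`true ↦ 1`, `false ↦ -1`). -/
noncomputable def boolSign (b : Bool) : ℝ := if b then 1 else -1

/-!
Bias the signs independently: by `8γ` towards `+1` on the coordinates of the support of `D` among
the last `⌈r₁⌉` ones, which carry mass at least `1/2 - γ`, and by `αγ` towards `-1` on `F`. The two
sums in the event are now only asked to reach their means. A weighted sum of independent, mildly
biased, centred signs has fourth moment at most three times its squared variance, so it is
nonnegative with probability at least `1/8`; the two sums involve disjoint coordinates, so the event
has biased probability at least `1/64`. By Cauchy–Schwarz the square of this probability is at most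
the uniform probability of the event times `∏ (1 + βᵢ²) ≤ exp (∑ βᵢ²)`, where the `βᵢ` are the
biases and `∑ βᵢ² = O(γ² r₁) + O(1)`.
-/

open ProbabilityTheory
open scoped unitInterval Finset

section Platykurtic

variable {Ω Ω' : Type*} {mΩ : MeasurableSpace Ω} {mΩ' : MeasurableSpace Ω'}
  {μ : Measure Ω} {ν : Measure Ω'} {X Y : Ω → ℝ}

/-- A centred random variable whose kurtosis `E[X⁴] / E[X²]²` is at most that of a Gaussian, namely
`3`. The inequality is stated without division so that the variable `0` is included, and membership
in `L⁴` makes both moments genuine. Independent sums preserve the class, and its members are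
nonnegative with probability bounded below. -/
structure IsPlatykurtic (X : Ω → ℝ) (μ : Measure Ω) : Prop where
  memLp : MemLp X 4 μ
  integral_eq_zero : ∫ ω, X ω ∂μ = 0
  integral_pow_four_le : ∫ ω, X ω ^ 4 ∂μ ≤ 3 * (∫ ω, X ω ^ 2 ∂μ) ^ 2

lemma integrable_pow_of_memLp [IsFiniteMeasure μ] {k n : ℕ} (hX : MemLp X n μ) (hk : k ≤ n) :
    Integrable (fun ω ↦ X ω ^ k) μ :=
  (hX.mono_exponent (by exact_mod_cast hk)).integrable_norm_pow'.mono' (hX.1.pow k)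
    (.of_forall fun ω ↦ by simp)

lemma integral_add_pow_four_of_indepFun [IsFiniteMeasure μ] (hX : MemLp X 4 μ) (hY : MemLp Y 4 μ)
    (hX0 : ∫ ω, X ω ∂μ = 0) (hY0 : ∫ ω, Y ω ∂μ = 0) (hXY : IndepFun X Y μ) :
    ∫ ω, (X + Y) ω ^ 4 ∂μ = ∫ ω, X ω ^ 4 ∂μ +
      6 * ((∫ ω, X ω ^ 2 ∂μ) * ∫ ω, Y ω ^ 2 ∂μ) + ∫ ω, Y ω ^ 4 ∂μ := by
  have integral_cross (k l : ℕ) :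
      ∫ ω, X ω ^ k * Y ω ^ l ∂μ = (∫ ω, X ω ^ k ∂μ) * ∫ ω, Y ω ^ l ∂μ :=
    hXY.integral_fun_comp_mul_comp hX.1.aemeasurable hY.1.aemeasurable
      (continuous_pow k).aestronglyMeasurable (continuous_pow l).aestronglyMeasurable
  have integrable_X {k : ℕ} (hk : k ≤ 4) := integrable_pow_of_memLp (n := 4) hX hk
  have integrable_Y {k : ℕ} (hk : k ≤ 4) := integrable_pow_of_memLp (n := 4) hY hk
  have integrable_cross {k l : ℕ} (hk : k ≤ 4) (hl : l ≤ 4) :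
      Integrable (fun ω ↦ X ω ^ k * Y ω ^ l) μ :=
    (hXY.comp (measurable_id.pow_const k) (measurable_id.pow_const l)).integrable_mul
      (integrable_X hk) (integrable_Y hl)
  have hX1 : ∫ ω, X ω ^ 1 ∂μ = 0 := by simpa only [pow_one] using hX0
  have hY1 : ∫ ω, Y ω ^ 1 ∂μ = 0 := by simpa only [pow_one] using hY0
  have expand (ω : Ω) : (X + Y) ω ^ 4 = X ω ^ 4 + 4 * (X ω ^ 3 * Y ω ^ 1) +
      6 * (X ω ^ 2 * Y ω ^ 2) + 4 * (X ω ^ 1 * Y ω ^ 3) + Y ω ^ 4 := by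
    rw [Pi.add_apply]
    ring
  have hX3Y := integrable_cross (k := 3) (l := 1) (by simp) (by simp)
  have hX2Y2 := integrable_cross (k := 2) (l := 2) (by simp) (by simp)
  have hXY3 := integrable_cross (k := 1) (l := 3) (by simp) (by simp)
  have hX4 := integrable_X le_rfl
  have hY4 := integrable_Y le_rfl
  simp_rw [expand]
  rw [integral_add (by fun_prop) hY4, integral_add (by fun_prop) (by fun_prop),
    integral_add (by fun_prop) (by fun_prop), integral_add (by fun_prop) (by fun_prop)]
  simp only [integral_const_mul, integral_cross, hX1, hY1]
  ring

-- The coefficients make the left side have mean at least `1 / 4 - 3 / 24 = 1 / 8` when `x` is a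
-- centred random variable with variance `t ^ 2` and kurtosis at most `3`.
lemma quartic_le_indicator_Ici (x : ℝ) {t : ℝ} (ht : 0 < t) :
    1 / (4 * t) * x + 1 / (4 * t ^ 2) * x ^ 2 - 1 / (24 * t ^ 4) * x ^ 4 ≤
      (Set.Ici 0).indicator 1 x := by
  obtain ⟨y, rfl⟩ : ∃ y, x = t * y := ⟨x / t, by field_simp⟩
  have rescale : 1 / (4 * t) * (t * y) + 1 / (4 * t ^ 2) * (t * y) ^ 2
      - 1 / (24 * t ^ 4) * (t * y) ^ 4 = y / 4 + y ^ 2 / 4 - y ^ 4 / 24 := by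
    field_simp
  rw [rescale]
  rcases le_or_gt 0 y with hy | hy
  · rw [Set.indicator_of_mem (Set.mem_Ici.2 (by positivity)), Pi.one_apply]
    nlinarith [sq_nonneg (y ^ 2 - 15 / 4), sq_nonneg (y - 2), sq_nonneg (y - 7 / 4)]
  · rw [Set.indicator_of_notMem (by simpa using mul_neg_of_pos_of_neg ht hy)]
    have cubic_nonneg : 0 ≤ 1 + y - y ^ 3 / 6 := by
      nlinarith [mul_nonneg (neg_nonneg.2 hy.le) (sq_nonneg (y + 3 / 2)), sq_nonneg (y + 3 / 2)]
    nlinarith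

namespace IsPlatykurtic

lemma comp_measurePreserving {f : Ω' → Ω} (hX : IsPlatykurtic X μ) (hf : MeasurePreserving f ν μ) :
    IsPlatykurtic (X ∘ f) ν := by
  have integral_comp_pow (k : ℕ) : ∫ ω, (X ∘ f) ω ^ k ∂ν = ∫ ω, X ω ^ k ∂μ := by
    rw [← hf.map_eq, integral_map hf.aemeasurable (hf.map_eq ▸ hX.memLp.1.pow k)]
    rfl
  refine ⟨hX.memLp.comp_measurePreserving hf, ?_, ?_⟩
  · simpa using (integral_comp_pow 1).trans (by simpa using hX.integral_eq_zero)
  · simpa only [integral_comp_pow] using hX.integral_pow_four_le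

lemma add [IsFiniteMeasure μ] (hX : IsPlatykurtic X μ) (hY : IsPlatykurtic Y μ)
    (hXY : IndepFun X Y μ) : IsPlatykurtic (X + Y) μ := by
  have memLp_add : MemLp (X + Y) 4 μ := hX.memLp.add hY.memLp
  have integral_add_eq_zero : ∫ ω, (X + Y) ω ∂μ = 0 := by
    rw [integral_add' (hX.memLp.integrable (by norm_num)) (hY.memLp.integrable (by norm_num)),
      hX.integral_eq_zero, hY.integral_eq_zero, add_zero]
  have second_moment : ∫ ω, (X + Y) ω ^ 2 ∂μ = ∫ ω, X ω ^ 2 ∂μ + ∫ ω, Y ω ^ 2 ∂μ := by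
    rw [← variance_of_integral_eq_zero memLp_add.1.aemeasurable integral_add_eq_zero,
      ← variance_of_integral_eq_zero hX.memLp.1.aemeasurable hX.integral_eq_zero,
      ← variance_of_integral_eq_zero hY.memLp.1.aemeasurable hY.integral_eq_zero,
      hXY.variance_add (hX.memLp.mono_exponent (by norm_num))
        (hY.memLp.mono_exponent (by norm_num))]
  refine ⟨memLp_add, integral_add_eq_zero, ?_⟩
  rw [second_moment, integral_add_pow_four_of_indepFun hX.memLp hY.memLp hX.integral_eq_zero
    hY.integral_eq_zero hXY]
  linarith [hX.integral_pow_four_le, hY.integral_pow_four_le]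

lemma sum {ι : Type*} {X : ι → Ω → ℝ} (hX : ∀ i, IsPlatykurtic (X i) μ) (hindep : iIndepFun X μ)
    (s : Finset ι) : IsPlatykurtic (∑ i ∈ s, X i) μ := by
  have := hindep.isProbabilityMeasure
  induction s using Finset.cons_induction with
  | empty => exact ⟨by simp, by simp, by simp⟩
  | cons i s hi ih =>
    rw [Finset.sum_cons, add_comm]
    exact ih.add (hX i)
      (hindep.indepFun_finsetSum_of_notMem₀ (fun j ↦ (hX j).memLp.1.aemeasurable) hi)

lemma one_div_eight_le_measureReal_nonneg [IsProbabilityMeasure μ] (hX : IsPlatykurtic X μ) :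
    1 / 8 ≤ μ.real {ω | 0 ≤ X ω} := by
  have iX : Integrable X μ := hX.memLp.integrable (by norm_num)
  have iX2 := integrable_pow_of_memLp (n := 4) (k := 2) hX.memLp (by simp)
  have iX4 := integrable_pow_of_memLp (n := 4) (k := 4) hX.memLp le_rfl
  have variance_nonneg : 0 ≤ ∫ ω, X ω ^ 2 ∂μ := integral_nonneg fun ω ↦ sq_nonneg _
  rcases variance_nonneg.eq_or_lt with variance_zero | variance_pos
  · have hX0 : ∀ᵐ ω ∂μ, 0 ≤ X ω := by
      filter_upwards [(integral_eq_zero_iff_of_nonneg (fun ω ↦ sq_nonneg (X ω)) iX2).1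
        variance_zero.symm] with ω hω
      exact (pow_eq_zero_iff two_ne_zero |>.1 hω).ge
    rw [measureReal_congr (Filter.eventuallyEq_univ.2 hX0), probReal_univ]
    norm_num
  · obtain ⟨t, ht, variance_eq⟩ : ∃ t > 0, ∫ ω, X ω ^ 2 ∂μ = t ^ 2 :=
      ⟨_, Real.sqrt_pos.2 variance_pos, (Real.sq_sqrt variance_nonneg).symm⟩
    have hmeas : NullMeasurableSet {ω | 0 ≤ X ω} μ :=
      nullMeasurableSet_le aemeasurable_const hX.memLp.1.aemeasurable
    calc
      1 / 8 = 1 / (4 * t) * 0 + 1 / (4 * t ^ 2) * t ^ 2 - 1 / (24 * t ^ 4) * (3 * (t ^ 2) ^ 2) := by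
        field_simp; ring
      _ ≤ 1 / (4 * t) * ∫ ω, X ω ∂μ + 1 / (4 * t ^ 2) * ∫ ω, X ω ^ 2 ∂μ
          - 1 / (24 * t ^ 4) * ∫ ω, X ω ^ 4 ∂μ := by
        rw [hX.integral_eq_zero, ← variance_eq]
        gcongr
        exact hX.integral_pow_four_le
      _ = ∫ ω, 1 / (4 * t) * X ω + 1 / (4 * t ^ 2) * X ω ^ 2 - 1 / (24 * t ^ 4) * X ω ^ 4 ∂μ := by
        rw [integral_sub (by fun_prop) (by fun_prop), integral_add (by fun_prop) (by fun_prop)]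
        simp only [integral_const_mul]
      _ ≤ ∫ ω, {ω | 0 ≤ X ω}.indicator 1 ω ∂μ := by
        refine integral_mono (by fun_prop) ?_ fun ω ↦ quartic_le_indicator_Ici (X ω) ht
        exact (integrable_const 1).indicator₀ hmeas
      _ = μ.real {ω | 0 ≤ X ω} := by
        simp [integral_indicator₀ hmeas]

end IsPlatykurtic

lemma isPlatykurtic_bernoulliMeasure [Finite Ω] [MeasurableSingletonClass Ω] {x y : Ω} {p : I}
    (hp : 1 / 6 ≤ (p : ℝ) * (1 - p)) (hX : ∫ ω, X ω ∂Ber(x, y, p) = 0) :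
    IsPlatykurtic X Ber(x, y, p) := by
  have hmean := hX
  simp only [integral_bernoulliMeasure, smul_eq_mul] at hmean
  obtain ⟨t, hx, hy⟩ : ∃ t, X x = (1 - p) * t ∧ X y = -p * t :=
    ⟨X x - X y, by linear_combination hmean, by linear_combination hmean⟩
  refine ⟨.of_discrete, hX, ?_⟩
  simp only [integral_bernoulliMeasure, smul_eq_mul, hx, hy]
  have h : 0 ≤ p * (1 - p) * (p * (1 - p) - 1 / 6 : ℝ) * t ^ 4 := by
    have := p.2.1
    have := sub_nonneg.2 p.2.2
    have := sub_nonneg.2 hp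
    positivity
  linear_combination 6 * h

end Platykurtic

section Pi

variable {ι : Type*} [Fintype ι] {E : ι → Type*} [∀ i, MeasurableSpace (E i)]
  {μ : (i : ι) → Measure (E i)} [∀ i, IsProbabilityMeasure (μ i)] {f g : (i : ι) → E i → ℝ}

lemma isPlatykurtic_sum_pi (hf : ∀ i, IsPlatykurtic (f i) (μ i)) (s : Finset ι) :
    IsPlatykurtic (fun ω ↦ ∑ i ∈ s, f i (ω i)) (Measure.pi μ) := by
  convert IsPlatykurtic.sum (fun i ↦ (hf i).comp_measurePreserving (measurePreserving_eval μ i))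
    (iIndepFun_pi fun i ↦ (hf i).memLp.1.aemeasurable) s
  simp

lemma indepFun_sum_pi (hf : ∀ i, AEMeasurable (f i) (μ i)) (hg : ∀ i, AEMeasurable (g i) (μ i))
    {s t : Finset ι} (hst : Disjoint s t) :
    IndepFun (fun ω ↦ ∑ i ∈ s, f i (ω i)) (fun ω ↦ ∑ i ∈ t, g i (ω i)) (Measure.pi μ) := by
  have hfg (i : ι) : AEMeasurable (fun x ↦ (f i x, g i x)) (μ i) := (hf i).prodMk (hg i)
  have indep_pairs := (iIndepFun_pi hfg).indepFun_finset₀ s t hst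
    fun i ↦ (hfg i).comp_quasiMeasurePreserving (Measure.quasiMeasurePreserving_eval μ i)
  convert indep_pairs.comp (φ := fun x ↦ ∑ i : s, (x i).1) (ψ := fun x ↦ ∑ i : t, (x i).2)
    (by fun_prop) (by fun_prop) using 2 with ω ω
  · exact (Finset.sum_coe_sort s fun i ↦ f i (ω i)).symm
  · exact (Finset.sum_coe_sort t fun i ↦ g i (ω i)).symm

lemma one_div_sixtyFour_le_measureReal_pi (hf : ∀ i, IsPlatykurtic (f i) (μ i))
    (hg : ∀ i, IsPlatykurtic (g i) (μ i)) {s t : Finset ι} (hst : Disjoint s t) :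
    1 / 64 ≤ (Measure.pi μ).real {ω | 0 ≤ ∑ i ∈ s, f i (ω i) ∧ 0 ≤ ∑ i ∈ t, g i (ω i)} := by
  have hindep := indepFun_sum_pi (fun i ↦ (hf i).memLp.1.aemeasurable)
    (fun i ↦ (hg i).memLp.1.aemeasurable) hst
  calc
    (1 / 64 : ℝ) = 1 / 8 * (1 / 8) := by norm_num
    _ ≤ (Measure.pi μ).real {ω | 0 ≤ ∑ i ∈ s, f i (ω i)} *
        (Measure.pi μ).real {ω | 0 ≤ ∑ i ∈ t, g i (ω i)} := by
      gcongr
      · exact (isPlatykurtic_sum_pi hf s).one_div_eight_le_measureReal_nonneg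
      · exact (isPlatykurtic_sum_pi hg t).one_div_eight_le_measureReal_nonneg
    _ = _ := by
      simp only [measureReal_def, ← ENNReal.toReal_mul]
      exact congrArg ENNReal.toReal (hindep.measure_inter_preimage_eq_mul (Set.Ici 0) (Set.Ici 0)
        measurableSet_Ici measurableSet_Ici).symm

end Pi

lemma sq_measureReal_le_mul_uniformOfFintype {Ω : Type*} [Fintype Ω] [Nonempty Ω]
    [MeasurableSpace Ω] [MeasurableSingletonClass Ω] (μ : Measure Ω) [IsFiniteMeasure μ]
    (S : Set Ω) :
    μ.real S ^ 2 ≤ (Fintype.card Ω * ∑ ω, μ.real {ω} ^ 2) *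
      (PMF.uniformOfFintype Ω).toMeasure.real S := by
  classical
  have uniform_eq : (PMF.uniformOfFintype Ω).toMeasure.real S = #S.toFinset / Fintype.card Ω := by
    rw [measureReal_def, PMF.toMeasure_uniformOfFintype_apply S S.toFinite.measurableSet,
      ← Set.toFinset_card]
    simp
  calc
    μ.real S ^ 2 = (∑ ω ∈ S.toFinset, μ.real {ω}) ^ 2 := by simp
    _ ≤ #S.toFinset * ∑ ω ∈ S.toFinset, μ.real {ω} ^ 2 := sq_sum_le_card_mul_sum_sq
    _ ≤ #S.toFinset * ∑ ω, μ.real {ω} ^ 2 := by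
      gcongr
      exact Finset.subset_univ _
    _ = _ := by
      rw [uniform_eq]
      field_simp

lemma card_mul_sum_sq_measureReal_pi {ι : Type*} [Fintype ι] [DecidableEq ι]
    {E : ι → Type*} [∀ i, Fintype (E i)] [∀ i, MeasurableSpace (E i)]
    (μ : (i : ι) → Measure (E i)) [∀ i, SigmaFinite (μ i)] :
    Fintype.card (∀ i, E i) * ∑ ω, (Measure.pi μ).real {ω} ^ 2 =
      ∏ i, (Fintype.card (E i) * ∑ x, (μ i).real {x} ^ 2) := by
  rw [Finset.prod_mul_distrib, Finset.prod_univ_sum, Fintype.piFinset_univ, Fintype.card_pi]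
  simp [measureReal_def, Finset.prod_pow]

lemma card_mul_sum_sq_bernoulliMeasure (p : I) :
    Fintype.card Bool * ∑ b, Ber(true, false, p).real {b} ^ 2 = 1 + (2 * p - 1 : ℝ) ^ 2 := by
  have apply_true : Ber(true, false, p).real {true} = p := by simp
  have apply_false : Ber(true, false, p).real {false} = 1 - p := by simp
  rw [Fintype.sum_bool, apply_true, apply_false, Fintype.card_bool]
  push_cast
  ring

lemma sq_measureReal_pi_bernoulliMeasure_le {ι : Type*} [Fintype ι] [DecidableEq ι] (p : ι → I)
    (S : Set (ι → Bool)) :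
    (Measure.pi fun i ↦ Ber(true, false, p i)).real S ^ 2 ≤
      Real.exp (∑ i, (2 * p i - 1 : ℝ) ^ 2) *
        (PMF.uniformOfFintype (ι → Bool)).toMeasure.real S := by
  have prod_le_exp : ∏ i, (1 + (2 * p i - 1 : ℝ) ^ 2) ≤ Real.exp (∑ i, (2 * p i - 1 : ℝ) ^ 2) := by
    rw [Real.exp_sum]
    gcongr with i
    exact (add_comm _ _).trans_le (Real.add_one_le_exp _)
  have cauchy_schwarz :=
    sq_measureReal_le_mul_uniformOfFintype (Measure.pi fun i ↦ Ber(true, false, p i)) S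
  rw [card_mul_sum_sq_measureReal_pi] at cauchy_schwarz
  simp only [card_mul_sum_sq_bernoulliMeasure] at cauchy_schwarz
  exact cauchy_schwarz.trans (by gcongr)

lemma exp_neg_le_measureReal_sum_mul_boolSign_and {ι : Type*} [Fintype ι] [DecidableEq ι]
    {β : ι → ℝ} (hβ : ∀ i, β i ^ 2 ≤ 1 / 3) (a b : ι → ℝ) {s t : Finset ι} (hst : Disjoint s t) :
    (1 / 64) ^ 2 * Real.exp (-∑ i, β i ^ 2) ≤
      (PMF.uniformOfFintype (ι → Bool)).toMeasure.real
        {h | ∑ i ∈ s, a i * β i ≤ ∑ i ∈ s, a i * boolSign (h i) ∧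
          ∑ i ∈ t, b i * β i ≤ ∑ i ∈ t, b i * boolSign (h i)} := by
  have hp (i : ι) : (1 + β i) / 2 ∈ I := by
    have := (sq_le_one_iff_abs_le_one (β i)).1 (by linarith [hβ i])
    constructor <;> linarith [abs_le.1 this]
  set p : ι → I := fun i ↦ ⟨(1 + β i) / 2, hp i⟩
  set S : Set (ι → Bool) := _
  change _ ≤ (PMF.uniformOfFintype (ι → Bool)).toMeasure.real S
  have centered (c : ι → ℝ) (i : ι) :
      IsPlatykurtic (fun x ↦ c i * (boolSign x - β i)) Ber(true, false, p i) := by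
    apply isPlatykurtic_bernoulliMeasure
    · change 1 / 6 ≤ (1 + β i) / 2 * (1 - (1 + β i) / 2)
      linarith [hβ i]
    · simp only [integral_bernoulliMeasure, smul_eq_mul, boolSign, if_true, Bool.false_eq_true,
        if_false, p]
      ring
  have biased_S : 1 / 64 ≤ (Measure.pi fun i ↦ Ber(true, false, p i)).real S := by
    convert one_div_sixtyFour_le_measureReal_pi (centered a) (centered b) hst using 3
    simp [mul_sub]
  have two_mul_p_sub_one (i : ι) : (2 * p i - 1 : ℝ) = β i := by
    change 2 * ((1 + β i) / 2) - 1 = β i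
    ring
  have transfer := sq_measureReal_pi_bernoulliMeasure_le p S
  simp only [two_mul_p_sub_one] at transfer
  rw [Real.exp_neg, ← div_eq_mul_inv, div_le_iff₀' (Real.exp_pos _)]
  exact le_trans (by gcongr) transfer

lemma sum_boolSign {ι : Type*} (s : Finset ι) (h : ι → Bool) :
    ∑ i ∈ s, boolSign (h i) = #s - 2 * #{i ∈ s | h i = false} := by
  have boolSign_eq (b : Bool) : boolSign b = 1 - 2 * if b = false then 1 else 0 := by
    cases b
    · norm_num [boolSign]
    · simp [boolSign]
  simp_rw [boolSign_eq, Finset.sum_sub_distrib, ← Finset.mul_sum, Finset.sum_boole]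
  simp

lemma exp_neg_le_measureReal_mul_sum_le_and_mul_card_le {ι : Type*} [Fintype ι] [DecidableEq ι]
    (D : ι → ℝ) {A W F : Finset ι} (hAW : A ⊆ W) (hWF : Disjoint W F) {η δ : ℝ}
    (hη : η ^ 2 ≤ 1 / 3) (hδ : δ ^ 2 ≤ 1 / 3) :
    (1 / 64) ^ 2 * Real.exp (-(η ^ 2 * #A + δ ^ 2 * #F)) ≤
      (PMF.uniformOfFintype (ι → Bool)).toMeasure.real
        {h | η * ∑ i ∈ A, D i ≤ ∑ i ∈ W, D i * boolSign (h i) ∧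
          (1 / 2 + δ / 2) * #F ≤ (#{i ∈ F | h i = false} : ℝ)} := by
  have hAF : Disjoint A F := hWF.mono_left hAW
  set β : ι → ℝ := fun i ↦ (if i ∈ A then η else 0) - if i ∈ F then δ else 0
  have notMem_F (i : ι) (hi : i ∈ A) : i ∉ F := Finset.disjoint_left.1 hAF hi
  have β_sq (i : ι) : β i ^ 2 = (if i ∈ A then η ^ 2 else 0) + if i ∈ F then δ ^ 2 else 0 := by
    grind
  have β_sq_le (i : ι) : β i ^ 2 ≤ 1 / 3 := by
    rw [β_sq]
    grind
  have sum_β_sq : ∑ i, β i ^ 2 = η ^ 2 * #A + δ ^ 2 * #F := by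
    simp [β_sq, Finset.sum_add_distrib, mul_comm]
  have sum_W : ∑ i ∈ W, D i * β i = η * ∑ i ∈ A, D i := by
    have restrict (i : ι) (hi : i ∈ W) : D i * β i = if i ∈ A then η * D i else 0 := by
      simp [β, Finset.disjoint_left.1 hWF hi, mul_comm]
    rw [Finset.sum_congr rfl restrict, Finset.sum_ite_mem, Finset.inter_eq_right.2 hAW,
      Finset.mul_sum]
  have sum_F : ∑ i ∈ F, -1 * β i = δ * #F := by
    have restrict (i : ι) (hi : i ∈ F) : -1 * β i = δ := by
      simp [β, hi, Finset.disjoint_right.1 hAF hi]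
    rw [Finset.sum_congr rfl restrict, Finset.sum_const, nsmul_eq_mul, mul_comm]
  have key := exp_neg_le_measureReal_sum_mul_boolSign_and β_sq_le D (fun _ ↦ -1) hWF
  rw [sum_β_sq, sum_W, sum_F] at key
  refine key.trans (measureReal_mono fun h hh ↦ ⟨hh.1, ?_⟩)
  have sum_F_le := hh.2
  rw [← Finset.mul_sum, sum_boolSign] at sum_F_le
  linarith

lemma card_filter_card_filter_lt {α : Type*} [LinearOrder α] (s : Finset α) (n : ℕ) :
    #{a ∈ s | #{b ∈ s | b < a} < n} = min n #s := by
  set rank : α → ℕ := fun a ↦ #{b ∈ s | b < a}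
  have rank_strictMonoOn : StrictMonoOn rank s := fun a ha b _ hab ↦
    Finset.card_lt_card <| Finset.ssubset_iff_of_subset
      (Finset.monotone_filter_right _ fun _ _ hc ↦ hc.trans hab) |>.2 ⟨a, by simpa [hab] using ha⟩
  have image_rank : s.image rank = Finset.range #s := by
    refine Finset.eq_of_subset_of_card_le (Finset.image_subset_iff.2 fun a ha ↦ ?_) ?_
    · exact Finset.mem_range.2
        (Finset.card_lt_card (Finset.filter_ssubset.2 ⟨a, ha, lt_irrefl a⟩))
    · rw [Finset.card_image_of_injOn rank_strictMonoOn.injOn, Finset.card_range]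
  calc
    #{a ∈ s | rank a < n} = #({a ∈ s | rank a < n}.image rank) :=
      (Finset.card_image_of_injOn <| rank_strictMonoOn.injOn.mono <|
        Finset.coe_subset.2 (Finset.filter_subset _ _)).symm
    _ = #{k ∈ Finset.range #s | k < n} := by rw [← image_rank, Finset.filter_image]
    _ = min n #s := by
      rw [show {k ∈ Finset.range #s | k < n} = Finset.range (min n #s) by ext; simp [and_comm],
        Finset.card_range]

lemma card_filter_card_filter_lt_eq_ceil {α : Type*} [LinearOrder α] {s : Finset α} {r : ℝ}
    (hr : r ≤ #s) : #{a ∈ s | (#{b ∈ s | b < a} : ℝ) < r} = ⌈r⌉₊ := by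
  simp_rw [← Nat.lt_ceil, card_filter_card_filter_lt, min_eq_left (Nat.ceil_le.2 hr)]

lemma card_filter_sub_lt_add_one (u : ℕ) (r : ℝ) :
    #{i : Fin u | (u : ℝ) - r < i + 1} ≤ ⌈r⌉₊ := by
  rw [← Finset.card_range ⌈r⌉₊]
  refine Finset.card_le_card_of_injOn (fun i ↦ (i.rev : ℕ)) (fun i hi ↦ ?_)
    (Fin.val_injective.comp Fin.rev_injective).injOn
  have hi : (u : ℝ) - r < i + 1 := by simpa using hi
  simp only [Finset.coe_range, Set.mem_Iio, Nat.lt_ceil, Fin.val_rev, Nat.cast_sub i.2]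
  push_cast
  linarith

lemma sq_mul_add_sq_mul_le {r α γ m n : ℝ} (hα : 1 ≤ α) (hr : 0 ≤ r) (hγ : 0 ≤ γ)
    (hαγ : α * γ ≤ 1 / 16) (hm : m ≤ α ^ 2 * r + 1) (hn : n ≤ r + 1) :
    (8 * γ) ^ 2 * m + (α * γ) ^ 2 * n ≤ 8 * 9 * γ ^ 2 * (α ^ 2 * r) + 1 / 2 := by
  have γ_le : γ ≤ 1 / 16 := (le_mul_of_one_le_left hγ hα).trans hαγ
  calc
    _ ≤ (8 * γ) ^ 2 * (α ^ 2 * r + 1) + (α * γ) ^ 2 * (r + 1) := by gcongr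
    _ = 65 * γ ^ 2 * (α ^ 2 * r) + 64 * γ ^ 2 + (α * γ) ^ 2 := by ring
    _ ≤ 8 * 9 * γ ^ 2 * (α ^ 2 * r) + 64 * (1 / 16) ^ 2 + (1 / 16) ^ 2 := by
      gcongr
      norm_num
    _ ≤ _ := by linarith

lemma exp_neg_le_measureReal_two_mul_le_and_mul_le {ι : Type*} [Fintype ι] [DecidableEq ι]
    {D : ι → ℝ} {A W F : Finset ι} (hAW : A ⊆ W) (hWF : Disjoint W F) {r α γ : ℝ}
    (hα : 1 ≤ α) (hγ : 0 ≤ γ) (hαγ : α * γ ≤ 1 / 16) (hr : 0 ≤ r) (hDA : 1 / 4 ≤ ∑ i ∈ A, D i)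
    (hA : #A ≤ α ^ 2 * r + 1) (hrF : r ≤ #F) (hF : #F ≤ r + 1) :
    (1 / 64) ^ 2 / 2 * Real.exp (-(8 * 9 * γ ^ 2 * (α ^ 2 * r))) ≤
      (PMF.uniformOfFintype (ι → Bool)).toMeasure.real
        {h | 2 * γ ≤ ∑ i ∈ W, D i * boolSign (h i) ∧
          (1 / 2 + α * γ / 2) * r ≤ (#{i ∈ F | h i = false} : ℝ)} := by
  have η_le : 8 * γ ≤ 1 / 2 := by linarith [le_mul_of_one_le_left hγ hα]
  have η_sq_le : (8 * γ) ^ 2 ≤ 1 / 3 :=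
    (pow_le_pow_left₀ (by positivity) η_le 2).trans (by norm_num)
  have δ_sq_le : (α * γ) ^ 2 ≤ 1 / 3 :=
    (pow_le_pow_left₀ (by positivity) hαγ 2).trans (by norm_num)
  have half_le_exp : 1 / 2 ≤ Real.exp (-(1 / 2)) := by
    linarith [Real.add_one_le_exp (-(1 / 2))]
  calc
    _ = (1 / 64) ^ 2 * (Real.exp (-(8 * 9 * γ ^ 2 * (α ^ 2 * r))) * (1 / 2)) := by ring
    _ ≤ (1 / 64) ^ 2 *
        (Real.exp (-(8 * 9 * γ ^ 2 * (α ^ 2 * r))) * Real.exp (-(1 / 2))) := by gcongr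
    _ ≤ (1 / 64) ^ 2 * Real.exp (-((8 * γ) ^ 2 * #A + (α * γ) ^ 2 * #F)) := by
      rw [← Real.exp_add, ← neg_add]
      exact mul_le_mul_of_nonneg_left
        (Real.exp_le_exp.2 (neg_le_neg (sq_mul_add_sq_mul_le hα hr hγ hαγ hA hF))) (by norm_num)
    _ ≤ _ := exp_neg_le_measureReal_mul_sum_le_and_mul_card_le D hAW hWF η_sq_le δ_sq_le
    _ ≤ _ := by
      refine measureReal_mono fun h ⟨hW, hF⟩ ↦ ⟨?_, ?_⟩
      · calc
          2 * γ = 8 * γ * (1 / 4) := by ring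
          _ ≤ 8 * γ * ∑ i ∈ A, D i := by gcongr
          _ ≤ _ := hW
      · exact le_trans (by gcongr) hF

lemma sum_filter_and_pos_add_sum_filter_pos_not {ι : Type*} [Fintype ι] {D : ι → ℝ}
    [DecidablePred (0 < D ·)] (hD : ∀ i, 0 ≤ D i) (p : ι → Prop) [DecidablePred p] :
    ∑ i with p i ∧ 0 < D i, D i + ∑ i with 0 < D i ∧ ¬ p i, D i = ∑ i, D i := by
  simp_rw [and_comm (a := p _), ← Finset.filter_filter, Finset.sum_filter_add_sum_filter_not]
  exact Finset.sum_filter_of_ne fun i _ hi ↦ (hD i).lt_of_ne' hi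

open scoped Classical in
/-- A uniformly random hypothesis `h ∈ {-1,1}^u` simultaneously has
advantage `2γ` under `D` and at least `(1/2 + αγ/2)·r` minus signs on the `r` smallest
elements of `{1,…,u−r₁} \ supp(D)`, with probability at least `(c₁²/2)·exp(−8c₂γ²r₁)`. -/
theorem adaboost_bad_hypothesis_lemma :
    ∃ c0 c1 c2 : ℝ, 0 < c0 ∧ c0 ≤ 1 ∧ 0 < c1 ∧ c1 ≤ 1 ∧ 1 ≤ c2 ∧
      ∀ (u : ℕ), 0 < u → ∀ r r1 α γ : ℝ,
        0 < r → 0 < r1 → 1 ≤ α → r1 = α ^ 2 * r → r1 ≤ (u : ℝ) →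
        0 < γ → γ ≤ c0 / (2 * α) →
        ∀ D : Fin u → ℝ, (∀ i, 0 ≤ D i) → ∑ i, D i = 1 →
        (∑ i ∈ Finset.univ.filter
            (fun (i : Fin u) => ((i : ℕ) + 1 : ℝ) ≤ (u : ℝ) - r1 ∧ 0 < D i), D i) ≤ 1 / 2 + γ →
        ∀ T : Finset (Fin u),
          T = Finset.univ.filter
            (fun (i : Fin u) => ((i : ℕ) + 1 : ℝ) ≤ (u : ℝ) - r1 ∧ ¬ 0 < D i) →
        r ≤ (T.card : ℝ) →
        ∀ F : Finset (Fin u),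
          F = T.filter (fun i => ((T.filter (fun j => j < i)).card : ℝ) < r) →
        ENNReal.ofReal (c1 ^ 2 / 2 * Real.exp (-(8 * c2 * γ ^ 2 * r1))) ≤
          (PMF.uniformOfFintype (Fin u → Bool)).toMeasure
            {h | 2 * γ ≤ (∑ i ∈ Finset.univ.filter (fun i => 0 < D i),
                    D i * boolSign (h i)) ∧
                 (1 / 2 + α * γ / 2) * r ≤ ((F.filter (fun i => h i = false)).card : ℝ)} := by
  refine ⟨1 / 8, 1 / 64, 9, by norm_num, by norm_num, by norm_num, by norm_num, by norm_num, ?_⟩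
  intro u _ r r1 α γ hr _ hα hr1 _ hγ hγ_le D hD hD_sum hhead T hT hrT F hF
  subst hr1
  have αγ_le : α * γ ≤ 1 / 16 := by
    rw [le_div_iff₀ (by positivity)] at hγ_le
    linarith
  have mass := sum_filter_and_pos_add_sum_filter_pos_not hD
    fun i : Fin u ↦ ((i : ℕ) + 1 : ℝ) ≤ u - α ^ 2 * r
  have card_tail : #{i : Fin u | 0 < D i ∧ ¬ ((i : ℕ) + 1 : ℝ) ≤ u - α ^ 2 * r} ≤ ⌈α ^ 2 * r⌉₊ :=
    le_trans (Finset.card_le_card fun i ↦ by simp +contextual) (card_filter_sub_lt_add_one u _)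
  have card_F : #F = ⌈r⌉₊ := by
    rw [hF]
    convert card_filter_card_filter_lt_eq_ceil hrT
  rw [ENNReal.ofReal_le_iff_le_toReal (measure_ne_top _ _)]
  refine exp_neg_le_measureReal_two_mul_le_and_mul_le (hα := hα) (hγ := hγ.le) (hαγ := αγ_le)
    (hr := hr.le) (A := {i | 0 < D i ∧ ¬ ((i : ℕ) + 1 : ℝ) ≤ u - α ^ 2 * r})
    (hAW := by grind) (hWF := Finset.disjoint_left.2 (by grind))
    (hDA := by linarith [le_mul_of_one_le_left hγ.le hα])
    (hA := (Nat.cast_le.2 card_tail).trans (Nat.ceil_lt_add_one (by positivity)).le)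
    (hrF := card_F ▸ Nat.le_ceil r) (hF := card_F ▸ (Nat.ceil_lt_add_one hr.le).le)
end

section
/- There exist universal constants c₀, c₁ ∈ (0,1] and c₂ ≥ 1 with the following property. Let u be an integer with u ≥ 2, let r, r₁ be nonnegative reals with r₁ = α²·r for some α ≥ 1 and r₁ ≤ u, let 0 < δ ≤ 1, and let γ satisfy 0 < γ < 1/4 and γ ≤ c₀/(2α). Set k = ln(u)·γ^{−2} and N = 2·c₁^{−2}·k·ln(k/δ)·exp(8·c₂·γ²·r₁). Let H be a random hypothesis set consisting of the fixed hypothesis h₀ together with k·⌈N/k⌉ independent uniformly random vectors in {−1,1}^u. Then with probability at least 1 − δ over H, for every probability distribution D on {1,…,u} there exists h ∈ H such that ∑_{i=1}^u D(i)·h(i) ≥ γ/4. -/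
open MeasureTheory

/-!
If `h0` has advantage less than `θ = 9γ/4 ≤ 1/8` under `D`, then `D` gives mass at least `1/4` to
the set `S` on which `h0 = -1`, and `|S| ≤ r + 1`. A uniform sign vector then has advantage at
least `θ` with probability `exp (-O(1 + γ² r))`: tilting the signs by a Riesz product whose means
are supported on `S` (or are proportional to `D`, when the second moment of `D` is large) raises the
mean of `∑ i, D i * ε i` to `2θ`, and Cauchy–Schwarz transfers the resulting lower bound back to
uniform signs at the price of the second moment of the density.

Run `⌈k⌉` rounds of multiplicative weights at rate `γ`, looking for the hypothesis of each round in
a fresh block of `⌈N / k⌉` random vectors, so that the weights used in a round are independent of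
its block. Unless some round fails, which has probability at most `δ` by a union bound, the
exponential potential shows that the average of the chosen hypotheses is at least
`θ - 2γ = γ/4` at every point; hence for every `D` one of them has advantage at least `γ/4`.
-/

section UniformProb

open Finset
open scoped BigOperators

variable {α β : Type*} [Fintype α] [Fintype β]

/-- The probability of the event `s` under the uniform distribution on a finite type, as a real
number. -/
noncomputable def uniformProb (s : Set α) : ℝ := 𝔼 a, s.indicator 1 a

lemma uniformProb_nonneg (s : Set α) : 0 ≤ uniformProb s :=
  expect_nonneg fun a _ ↦ Set.indicator_nonneg (fun _ _ ↦ zero_le_one) a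

lemma uniformProb_mono {s t : Set α} (h : s ⊆ t) : uniformProb s ≤ uniformProb t :=
  expect_le_expect fun a _ ↦ Set.indicator_le_indicator_of_subset h (fun _ ↦ zero_le_one) a

lemma uniformProb_le_one [Nonempty α] (s : Set α) : uniformProb s ≤ 1 :=
  expect_le univ_nonempty fun _ _ ↦ Set.indicator_apply_le' (fun _ ↦ le_rfl) fun _ ↦ zero_le_one

lemma uniformProb_compl [Nonempty α] (s : Set α) : uniformProb sᶜ = 1 - uniformProb s := by
  simp only [uniformProb, Set.indicator_compl, Pi.sub_apply, Pi.one_apply, expect_sub_distrib,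
    Fintype.expect_one]

lemma uniformProb_preimage_equiv (e : α ≃ β) (s : Set β) :
    uniformProb (e ⁻¹' s) = uniformProb s :=
  Fintype.expect_equiv e _ _ fun _ ↦ rfl

lemma toMeasure_uniformOfFintype_eq_ofReal [Nonempty α] [MeasurableSpace α]
    [MeasurableSingletonClass α] (s : Set α) :
    (PMF.uniformOfFintype α).toMeasure s = ENNReal.ofReal (uniformProb s) := by
  classical
  rw [PMF.toMeasure_uniformOfFintype_apply _ s.toFinite.measurableSet, uniformProb,
    Fintype.expect_eq_sum_div_card, ENNReal.ofReal_div_of_pos (by positivity)]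
  simp [Set.indicator_apply, Fintype.card_subtype]

lemma expect_prod_apply {ι κ : Type*} [Fintype ι] [DecidableEq ι] [Fintype κ] (f : ι → κ → ℝ) :
    𝔼 x : ι → κ, ∏ i, f i (x i) = ∏ i, 𝔼 y, f i y := by
  simp only [Fintype.expect_eq_sum_div_card, prod_div_distrib, Fintype.prod_sum, prod_const,
    Fintype.card_fun, Nat.cast_pow, card_univ]

lemma uniformProb_pi {ι κ : Type*} [Fintype ι] [DecidableEq ι] [Fintype κ] (s : ι → Set κ) :
    uniformProb (Set.univ.pi s) = ∏ i, uniformProb (s i) := by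
  rw [← coe_univ]
  simp only [uniformProb, ← expect_prod_apply, Set.indicator_pi_one_apply]

lemma expect_fin_cons {n : ℕ} (f : (Fin (n + 1) → α) → ℝ) :
    𝔼 x, f x = 𝔼 a, 𝔼 x : Fin n → α, f (Fin.cons a x) := by
  rw [← expect_product', univ_product_univ]
  exact (Fintype.expect_equiv (Fin.consEquiv fun _ ↦ α) _ _ fun _ ↦ rfl).symm

lemma uniformProb_le_add_of_cons [Nonempty α] {n : ℕ} {s : Set (Fin (n + 1) → α)} {t : Set α}
    {p q : ℝ} (hq : 0 ≤ q) (ht : uniformProb t ≤ p)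
    (hs : ∀ a ∉ t, uniformProb {x : Fin n → α | Fin.cons a x ∈ s} ≤ q) :
    uniformProb s ≤ p + q := by
  calc uniformProb s = 𝔼 a, uniformProb {x : Fin n → α | Fin.cons a x ∈ s} := expect_fin_cons _
    _ ≤ 𝔼 a, (t.indicator 1 a + q) := by
        refine expect_le_expect fun a _ ↦ ?_
        by_cases ha : a ∈ t
        · rw [Set.indicator_of_mem ha]
          exact (uniformProb_le_one _).trans (le_add_of_nonneg_right hq)
        · rw [Set.indicator_of_notMem ha, zero_add]
          exact hs a ha
    _ = uniformProb t + q := by rw [expect_add_distrib, Fintype.expect_const]; rfl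
    _ ≤ p + q := by gcongr

lemma sq_expect_mul_mul_le {w : α → ℝ} (hw : ∀ a, 0 ≤ w a) (f g : α → ℝ) :
    (𝔼 a, w a * f a * g a) ^ 2 ≤ (𝔼 a, w a * f a ^ 2) * 𝔼 a, w a * g a ^ 2 := by
  have h := expect_mul_sq_le_sq_mul_sq univ (fun a ↦ √(w a) * f a) fun a ↦ √(w a) * g a
  have hmul (a : α) : √(w a) * f a * (√(w a) * g a) = w a * f a * g a := by
    linear_combination f a * g a * Real.mul_self_sqrt (hw a)
  simpa only [hmul, mul_pow, Real.sq_sqrt (hw _)] using h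

lemma pow_four_sub_le_mul_uniformProb {w : α → ℝ} (hw : ∀ a, 0 ≤ w a) (hw1 : 𝔼 a, w a = 1)
    (f : α → ℝ) {θ : ℝ} (hθ0 : 0 ≤ θ) (hθ : θ ≤ 𝔼 a, w a * f a) :
    ((𝔼 a, w a * f a) - θ) ^ 4 ≤
      (𝔼 a, w a * f a ^ 2) ^ 2 * ((𝔼 a, w a ^ 2) * uniformProb {a | θ ≤ f a}) := by
  set e : α → ℝ := {a | θ ≤ f a}.indicator 1
  have he (a : α) : e a ^ 2 = e a := by
    by_cases ha : θ ≤ f a <;> simp [e, ha]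
  have hexcess : (𝔼 a, w a * f a) - θ ≤ 𝔼 a, w a * f a * e a := by
    calc (𝔼 a, w a * f a) - θ = 𝔼 a, w a * (f a - θ) := by
          simp only [mul_sub, expect_sub_distrib, ← expect_mul, hw1, one_mul]
      _ ≤ 𝔼 a, w a * f a * e a := by
          refine expect_le_expect fun a _ ↦ ?_
          by_cases ha : θ ≤ f a
          · simp only [e, Set.indicator_of_mem (show a ∈ {a | θ ≤ f a} from ha), Pi.one_apply,
              mul_one]
            exact mul_le_mul_of_nonneg_left (sub_le_self _ hθ0) (hw a)
          · simp only [e, Set.indicator_of_notMem (show a ∉ {a | θ ≤ f a} from ha), mul_zero]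
            exact mul_nonpos_of_nonneg_of_nonpos (hw a) (sub_nonpos.2 (not_le.1 ha).le)
  have hfirst := sq_expect_mul_mul_le hw f e
  have hsecond := expect_mul_sq_le_sq_mul_sq univ w e
  simp only [he] at hfirst hsecond
  calc ((𝔼 a, w a * f a) - θ) ^ 4 = (((𝔼 a, w a * f a) - θ) ^ 2) ^ 2 := by ring
    _ ≤ ((𝔼 a, w a * f a * e a) ^ 2) ^ 2 := by gcongr
    _ ≤ ((𝔼 a, w a * f a ^ 2) * 𝔼 a, w a * e a) ^ 2 := by gcongr
    _ = (𝔼 a, w a * f a ^ 2) ^ 2 * (𝔼 a, w a * e a) ^ 2 := mul_pow ..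
    _ ≤ _ := by gcongr; exact hsecond

end UniformProb

section Rademacher

open Finset
open scoped BigOperators

variable {ι : Type*} [Fintype ι]

lemma abs_boolSign (b : Bool) : |boolSign b| = 1 := by cases b <;> simp [boolSign]

lemma sq_boolSign (b : Bool) : boolSign b ^ 2 = 1 := by cases b <;> simp [boolSign]

lemma expect_bool (f : Bool → ℝ) : 𝔼 b, f b = (f true + f false) / 2 := by
  rw [Fintype.expect_eq_sum_div_card, Fintype.sum_bool, Fintype.card_bool, Nat.cast_ofNat]

/-- The Rademacher sum `∑ i, w i * ε i`, with the random signs `ε` encoded by Booleans. -/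
noncomputable def rademacherSum (w : ι → ℝ) (b : ι → Bool) : ℝ := ∑ i, w i * boolSign (b i)

/-- The Riesz product `∏ i, (1 + τ i * ε i)`. When `|τ i| ≤ 1` it is the density, with respect to
uniform signs, of independent signs with means `τ i`. -/
noncomputable def rieszProduct (τ : ι → ℝ) (b : ι → Bool) : ℝ := ∏ i, (1 + τ i * boolSign (b i))

lemma rieszProduct_nonneg {τ : ι → ℝ} (hτ : ∀ i, |τ i| ≤ 1) (b : ι → Bool) :
    0 ≤ rieszProduct τ b := by
  refine prod_nonneg fun i _ ↦ ?_
  have h : |τ i * boolSign (b i)| ≤ 1 := by rw [abs_mul, abs_boolSign, mul_one]; exact hτ i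
  linarith [neg_le_of_abs_le h]

variable [DecidableEq ι]

lemma expect_rieszProduct_mul_prod_boolSign (τ : ι → ℝ) (S : Finset ι) :
    𝔼 b, rieszProduct τ b * ∏ i ∈ S, boolSign (b i) = ∏ i ∈ S, τ i := by
  have hprod (b : ι → Bool) : rieszProduct τ b * ∏ i ∈ S, boolSign (b i) =
      ∏ i, (1 + τ i * boolSign (b i)) * if i ∈ S then boolSign (b i) else 1 := by
    rw [prod_mul_distrib, Fintype.prod_ite_mem, rieszProduct]
  have hfactor (i : ι) : 𝔼 x, (1 + τ i * boolSign x) * (if i ∈ S then boolSign x else 1) =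
      if i ∈ S then τ i else 1 := by
    split_ifs <;> simp only [expect_bool, boolSign, if_true, Bool.false_eq_true, if_false] <;> ring
  simp only [hprod, hfactor, Fintype.prod_ite_mem,
    expect_prod_apply fun i x ↦ (1 + τ i * boolSign x) * if i ∈ S then boolSign x else 1]

lemma expect_rieszProduct (τ : ι → ℝ) : 𝔼 b, rieszProduct τ b = 1 := by
  simpa only [prod_empty, mul_one] using expect_rieszProduct_mul_prod_boolSign τ ∅

lemma expect_rieszProduct_sq (τ : ι → ℝ) : 𝔼 b, rieszProduct τ b ^ 2 = ∏ i, (1 + τ i ^ 2) := by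
  simp only [rieszProduct, ← prod_pow, expect_prod_apply fun i x ↦ (1 + τ i * boolSign x) ^ 2,
    expect_bool]
  refine prod_congr rfl fun i _ ↦ ?_
  simp only [boolSign, if_true, Bool.false_eq_true, if_false]
  ring

lemma expect_rieszProduct_mul_rademacherSum (τ w : ι → ℝ) :
    𝔼 b, rieszProduct τ b * rademacherSum w b = ∑ i, τ i * w i := by
  have hmean (j : ι) : 𝔼 b, rieszProduct τ b * boolSign (b j) = τ j := by
    simpa only [prod_singleton] using expect_rieszProduct_mul_prod_boolSign τ {j}
  simp only [rademacherSum, mul_sum, expect_sum_comm, mul_left_comm (rieszProduct τ _),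
    ← mul_expect, hmean, mul_comm (τ _)]

lemma expect_rieszProduct_mul_rademacherSum_sq_le (τ w : ι → ℝ) :
    𝔼 b, rieszProduct τ b * rademacherSum w b ^ 2 ≤ (∑ i, τ i * w i) ^ 2 + ∑ i, w i ^ 2 := by
  have hpair (j k : ι) : 𝔼 b, rieszProduct τ b * (boolSign (b j) * boolSign (b k)) =
      τ j * τ k + if j = k then 1 - τ j ^ 2 else 0 := by
    split_ifs with hjk
    · subst hjk
      simp only [← sq, sq_boolSign, mul_one, expect_rieszProduct, add_sub_cancel]
    · simpa only [prod_pair hjk, add_zero] using expect_rieszProduct_mul_prod_boolSign τ {j, k}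
  have hexpand (b : ι → Bool) : rieszProduct τ b * rademacherSum w b ^ 2 =
      ∑ j, ∑ k, w j * w k * (rieszProduct τ b * (boolSign (b j) * boolSign (b k))) := by
    rw [rademacherSum, sq, sum_mul_sum, mul_sum]
    refine sum_congr rfl fun j _ ↦ ?_
    rw [mul_sum]
    exact sum_congr rfl fun k _ ↦ by ring
  calc 𝔼 b, rieszProduct τ b * rademacherSum w b ^ 2
      = ∑ j, ∑ k, w j * w k * (τ j * τ k + if j = k then 1 - τ j ^ 2 else 0) := by
        simp only [hexpand, expect_sum_comm, ← mul_expect, hpair]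
    _ = (∑ i, τ i * w i) ^ 2 + ∑ i, w i ^ 2 * (1 - τ i ^ 2) := by
        simp only [mul_add, sum_add_distrib, mul_ite, mul_zero, sum_ite_eq, mem_univ, if_true]
        rw [sq, sum_mul_sum]
        congr 1
        · exact sum_congr rfl fun j _ ↦ sum_congr rfl fun k _ ↦ by ring
        · exact sum_congr rfl fun j _ ↦ by ring
    _ ≤ (∑ i, τ i * w i) ^ 2 + ∑ i, w i ^ 2 := by
        gcongr with i
        exact mul_le_of_le_one_right (sq_nonneg _) (sub_le_self _ (sq_nonneg _))

lemma expect_rieszProduct_sq_le_exp (τ : ι → ℝ) :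
    𝔼 b, rieszProduct τ b ^ 2 ≤ Real.exp (∑ i, τ i ^ 2) := by
  rw [expect_rieszProduct_sq, Real.exp_sum]
  gcongr with i
  rw [add_comm]
  exact Real.add_one_le_exp _

lemma exp_neg_div_le_uniformProb_of_tilt {τ w : ι → ℝ} {θ : ℝ} (hτ : ∀ i, |τ i| ≤ 1) (hθ : 0 < θ)
    (hmean : 2 * θ ≤ ∑ i, τ i * w i) (hvar : ∑ i, w i ^ 2 ≤ (∑ i, τ i * w i) ^ 2) :
    Real.exp (-∑ i, τ i ^ 2) / 64 ≤ uniformProb {b | θ ≤ rademacherSum w b} := by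
  set m := ∑ i, τ i * w i
  set p := uniformProb {b | θ ≤ rademacherSum w b}
  have hp : 0 ≤ p := uniformProb_nonneg _
  have hpow := pow_four_sub_le_mul_uniformProb (rieszProduct_nonneg hτ) (expect_rieszProduct τ)
    (rademacherSum w) hθ.le (by rw [expect_rieszProduct_mul_rademacherSum]; linarith)
  rw [expect_rieszProduct_mul_rademacherSum] at hpow
  have hmoment : 𝔼 b, rieszProduct τ b * rademacherSum w b ^ 2 ≤ 2 * m ^ 2 := by
    linarith [expect_rieszProduct_mul_rademacherSum_sq_le τ w]
  have hmoment0 : 0 ≤ 𝔼 b, rieszProduct τ b * rademacherSum w b ^ 2 :=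
    expect_nonneg fun b _ ↦ mul_nonneg (rieszProduct_nonneg hτ b) (sq_nonneg _)
  have hscaled : m ^ 4 * 1 ≤ m ^ 4 * (64 * (Real.exp (∑ i, τ i ^ 2) * p)) := by
    calc m ^ 4 * 1 = 16 * (m / 2) ^ 4 := by ring
      _ ≤ 16 * (m - θ) ^ 4 := by gcongr <;> linarith
      _ ≤ 16 * ((2 * m ^ 2) ^ 2 * (Real.exp (∑ i, τ i ^ 2) * p)) := by
          refine mul_le_mul_of_nonneg_left (hpow.trans ?_) (by norm_num)
          gcongr
          exact expect_rieszProduct_sq_le_exp τ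
      _ = m ^ 4 * (64 * (Real.exp (∑ i, τ i ^ 2) * p)) := by ring
  have hm : 0 < m := by linarith
  have hcancel := le_of_mul_le_mul_left hscaled (by positivity)
  rw [Real.exp_neg, div_le_iff₀ (by norm_num), inv_le_iff_one_le_mul₀ (Real.exp_pos _)]
  linarith

lemma exp_neg_max_div_le_uniformProb {w : ι → ℝ} {S : Finset ι} {θ a : ℝ} (hθ : 0 < θ)
    (hθ8 : θ ≤ 1 / 8) (ha : 0 < a) (hS : a ≤ 4 * ∑ i ∈ S, w i) :
    Real.exp (-max 1 (64 * θ ^ 2 * #S)) / 64 ≤ uniformProb {b | θ * a ≤ rademacherSum w b} := by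
  have hθa : 0 < θ * a := mul_pos hθ ha
  suffices h : ∃ τ : ι → ℝ, (∀ i, |τ i| ≤ 1) ∧ 2 * (θ * a) ≤ ∑ i, τ i * w i ∧
      ∑ i, w i ^ 2 ≤ (∑ i, τ i * w i) ^ 2 ∧ ∑ i, τ i ^ 2 ≤ max 1 (64 * θ ^ 2 * #S) by
    obtain ⟨τ, hτ, hmean, hvar, hsq⟩ := h
    refine le_trans ?_ (exp_neg_div_le_uniformProb_of_tilt hτ hθa hmean hvar)
    gcongr
  set A := ∑ i, w i ^ 2
  -- If `A` is small, the tilt on `S` alone makes the mean dominate the standard deviation `√A`;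
  -- otherwise the tilt of unit Euclidean norm along `w` has mean exactly `√A`.
  rcases le_total A ((2 * (θ * a)) ^ 2) with hsmall | hlarge
  · have hmean : ∑ i, (if i ∈ S then 8 * θ else 0) * w i = 8 * θ * ∑ i ∈ S, w i := by
      simp only [ite_mul, zero_mul, sum_ite_mem, univ_inter, mul_sum]
    have hlower : 2 * (θ * a) ≤ 8 * θ * ∑ i ∈ S, w i := by
      linarith [mul_le_mul_of_nonneg_left hS hθ.le]
    refine ⟨fun i ↦ if i ∈ S then 8 * θ else 0, fun i ↦ ?_, ?_, ?_, ?_⟩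
    · dsimp only
      split_ifs
      · rw [abs_of_pos (by positivity)]; linarith
      · simp
    · rwa [hmean]
    · rw [hmean]; exact hsmall.trans (by gcongr)
    · refine le_max_of_le_right (le_of_eq ?_)
      simp only [ite_pow, ne_eq, OfNat.ofNat_ne_zero, not_false_eq_true, zero_pow, sum_ite_mem,
        univ_inter, sum_const, nsmul_eq_mul]
      ring
  · have hA : 0 < A := lt_of_lt_of_le (by positivity) hlarge
    have hmean : ∑ i, w i / √A * w i = √A := by
      simp only [div_mul_eq_mul_div, ← sq, ← sum_div]
      exact Real.div_sqrt
    refine ⟨fun i ↦ w i / √A, fun i ↦ ?_, ?_, ?_, ?_⟩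
    · rw [abs_div, abs_of_pos (Real.sqrt_pos.2 hA), div_le_one (Real.sqrt_pos.2 hA)]
      exact Real.abs_le_sqrt (single_le_sum (fun j _ ↦ sq_nonneg (w j)) (mem_univ i))
    · rw [hmean]; exact Real.le_sqrt_of_sq_le hlarge
    · rw [hmean, Real.sq_sqrt hA.le]
    · refine le_max_of_le_left (le_of_eq ?_)
      simp only [div_pow, Real.sq_sqrt hA.le, ← sum_div]
      exact div_self hA.ne'

end Rademacher

section Boosting

open Finset

variable {ι : Type*} [Fintype ι]

/-- The set `H` is a weak-learner hypothesis set with advantage `a`: for every distribution on the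
domain `ι`, some hypothesis in `H` has correlation at least `a` with the constant label `1`. -/
def HasAdvantage (H : Set (ι → ℝ)) (a : ℝ) : Prop :=
  ∀ D : ι → ℝ, (∀ i, 0 ≤ D i) → ∑ i, D i = 1 → ∃ f ∈ H, a ≤ ∑ i, D i * f i

lemma sum_mul_exp_neg_mul_le {w f : ι → ℝ} {γ θ : ℝ} (hw : ∀ i, 0 ≤ w i) (hf : ∀ i, |f i| ≤ 1)
    (hγ : 0 ≤ γ) (hγ1 : γ ≤ 1) (h : θ * ∑ i, w i ≤ ∑ i, w i * f i) :
    ∑ i, w i * Real.exp (-γ * f i) ≤ (∑ i, w i) * Real.exp (-(γ * (θ - γ))) := by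
  have hexp (i : ι) : Real.exp (-γ * f i) ≤ 1 + γ ^ 2 - γ * f i := by
    have habs : |-γ * f i| ≤ γ := by
      rw [abs_mul, abs_neg, abs_of_nonneg hγ]
      exact mul_le_of_le_one_right hγ (hf i)
    have hsq : (-γ * f i) ^ 2 ≤ γ ^ 2 := sq_le_sq.2 (by rwa [abs_of_nonneg hγ])
    linarith [le_of_abs_le (Real.abs_exp_sub_one_sub_id_le (habs.trans hγ1))]
  calc ∑ i, w i * Real.exp (-γ * f i) ≤ ∑ i, w i * (1 + γ ^ 2 - γ * f i) := by
        gcongr with i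
        · exact hw i
        · exact hexp i
    _ = (1 + γ ^ 2) * ∑ i, w i - γ * ∑ i, w i * f i := by
        rw [mul_sum, mul_sum, ← sum_sub_distrib]
        exact sum_congr rfl fun i _ ↦ by ring
    _ ≤ (1 + γ ^ 2) * ∑ i, w i - γ * (θ * ∑ i, w i) := by gcongr
    _ = (∑ i, w i) * (-(γ * (θ - γ)) + 1) := by ring
    _ ≤ (∑ i, w i) * Real.exp (-(γ * (θ - γ))) := by
        gcongr
        · exact sum_nonneg fun i _ ↦ hw i
        · exact Real.add_one_le_exp _

lemma hasAdvantage_of_sum_exp_le {H : Set (ι → ℝ)} {K : ℕ} {s : Fin K → ι → ℝ} {γ θ : ℝ}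
    (hK : 0 < K) (hγ : 0 < γ) (hlog : Real.log (Fintype.card ι) ≤ K * γ ^ 2) (hs : ∀ j, s j ∈ H)
    (hsum : ∑ i, Real.exp (-γ * ∑ j, s j i) ≤
      Fintype.card ι * Real.exp (-(γ * (θ - γ))) ^ K) :
    HasAdvantage H (θ - 2 * γ) := by
  intro D hD hD1
  have hmargin (i : ι) : K * (θ - 2 * γ) ≤ ∑ j, s j i := by
    have hcard : (0 : ℝ) < Fintype.card ι := by exact_mod_cast Fintype.card_pos_iff.2 ⟨i⟩
    have hexp : Real.exp (-γ * ∑ j, s j i) ≤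
        Real.exp (Real.log (Fintype.card ι) + K * -(γ * (θ - γ))) := by
      rw [Real.exp_add, Real.exp_log hcard, Real.exp_nat_mul]
      exact (single_le_sum (f := fun i ↦ Real.exp (-γ * ∑ j, s j i))
        (fun _ _ ↦ (Real.exp_pos _).le) (mem_univ i)).trans hsum
    refine le_of_mul_le_mul_left ?_ hγ
    linarith [Real.exp_le_exp.1 hexp]
  have haverage : ∑ _j : Fin K, (θ - 2 * γ) ≤ ∑ j, ∑ i, D i * s j i := by
    calc ∑ _j : Fin K, (θ - 2 * γ) = ∑ i, D i * (K * (θ - 2 * γ)) := by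
          rw [← sum_mul, hD1, one_mul, sum_const, card_univ, Fintype.card_fin, nsmul_eq_mul]
      _ ≤ ∑ i, D i * ∑ j, s j i := by
          gcongr with i
          · exact hD i
          · exact hmargin i
      _ = ∑ j, ∑ i, D i * s j i := by simp only [mul_sum]; exact sum_comm
  obtain ⟨j, -, hj⟩ := exists_le_of_sum_le ⟨⟨0, hK⟩, mem_univ _⟩ haverage
  exact ⟨s j, hs j, hj⟩

lemma uniformProb_forall_lt_sum_exp_le {G : Type*} [Fintype G] [Nonempty G] {H : G → Set (ι → ℝ)}
    {γ ρ q : ℝ} (hρ : 0 ≤ ρ)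
    (hstep : ∀ w : ι → ℝ, (∀ i, 0 ≤ w i) →
      uniformProb {x | ∀ f ∈ H x, (∑ i, w i) * ρ < ∑ i, w i * Real.exp (-γ * f i)} ≤ q)
    (n : ℕ) {w : ι → ℝ} (hw : ∀ i, 0 ≤ w i) :
    uniformProb {g : Fin n → G | ∀ s : Fin n → ι → ℝ, (∀ j, s j ∈ H (g j)) →
      (∑ i, w i) * ρ ^ n < ∑ i, w i * Real.exp (-γ * ∑ j, s j i)} ≤ n * q := by
  have hq : 0 ≤ q := (uniformProb_nonneg _).trans (hstep w hw)
  induction n generalizing w with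
  | zero => simp [uniformProb]
  | succ n ih =>
    rw [Nat.cast_succ, add_one_mul, add_comm _ q]
    refine uniformProb_le_add_of_cons (by positivity) (hstep w hw) fun x hx ↦ ?_
    simp only [Set.mem_ofPred_eq, not_forall, not_lt] at hx
    obtain ⟨f, hf, hfw⟩ := hx
    set w' : ι → ℝ := fun i ↦ w i * Real.exp (-γ * f i)
    have hsub : {g : Fin n → G | Fin.cons x g ∈ {g : Fin (n + 1) → G |
          ∀ s : Fin (n + 1) → ι → ℝ, (∀ j, s j ∈ H (g j)) →
            (∑ i, w i) * ρ ^ (n + 1) < ∑ i, w i * Real.exp (-γ * ∑ j, s j i)}} ⊆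
        {g : Fin n → G | ∀ s : Fin n → ι → ℝ, (∀ j, s j ∈ H (g j)) →
          (∑ i, w' i) * ρ ^ n < ∑ i, w' i * Real.exp (-γ * ∑ j, s j i)} := by
      intro g hg s hs
      have hlt := hg (Fin.cons f s) (Fin.cases hf hs)
      calc (∑ i, w' i) * ρ ^ n ≤ (∑ i, w i) * ρ * ρ ^ n := by gcongr
        _ = (∑ i, w i) * ρ ^ (n + 1) := by ring
        _ < ∑ i, w i * Real.exp (-γ * ∑ j, (Fin.cons f s : Fin (n + 1) → ι → ℝ) j i) := hlt
        _ = ∑ i, w' i * Real.exp (-γ * ∑ j, s j i) := by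
            simp only [w', Fin.sum_univ_succ, Fin.cons_zero, Fin.cons_succ, mul_add, Real.exp_add,
              mul_assoc]
    exact (uniformProb_mono hsub).trans (ih fun i ↦ mul_nonneg (hw i) (Real.exp_pos _).le)

end Boosting

section RandomHypotheses

open Finset

variable {ι T : Type*}

/-- The hypothesis set consisting of `h0` and the `±1` vectors encoded by the Boolean vectors
`g t`. -/
def hypothesisSet (h0 : ι → ℝ) (g : T → ι → Bool) : Set (ι → ℝ) :=
  insert h0 {f | ∃ t : T, f = fun i ↦ boolSign (g t i)}

lemma abs_le_one_of_mem_hypothesisSet {h0 f : ι → ℝ} (hh0 : ∀ i, h0 i = 1 ∨ h0 i = -1)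
    {g : T → ι → Bool} (hf : f ∈ hypothesisSet h0 g) (i : ι) : |f i| ≤ 1 := by
  obtain rfl | ⟨t, rfl⟩ := hf
  · rcases hh0 i with h | h <;> simp [h]
  · exact (abs_boolSign _).le

lemma hypothesisSet_comp_subset {T' : Type*} (h0 : ι → ℝ) (g : T → ι → Bool) (e : T' → T) :
    hypothesisSet h0 (g ∘ e) ⊆ hypothesisSet h0 g :=
  Set.insert_subset_insert fun _ ⟨t, ht⟩ ↦ ⟨e t, ht⟩

variable [Fintype ι] [DecidableEq ι] [Fintype T] [DecidableEq T]

/-- A lower bound for the probability that a uniform `±1` vector has advantage `θ` when at most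
`r + 1` entries of the fixed hypothesis are `-1`. -/
noncomputable def advantageProb (θ r : ℝ) : ℝ := Real.exp (-(1 + 64 * θ ^ 2 * r)) / 64

lemma advantageProb_le_uniformProb {h0 w : ι → ℝ} {θ r : ℝ} (hh0 : ∀ i, h0 i = 1 ∨ h0 i = -1)
    (hr : 0 ≤ r) (hcard : (#{i | h0 i = -1} : ℝ) ≤ r + 1) (hθ : 0 < θ) (hθ8 : θ ≤ 1 / 8)
    (hw : ∀ i, 0 ≤ w i) (h : ∑ i, w i * h0 i < θ * ∑ i, w i) :
    advantageProb θ r ≤ uniformProb {b | θ * ∑ i, w i ≤ rademacherSum w b} := by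
  have hsplit : ∑ i, w i * h0 i = ∑ i, w i - 2 * ∑ i with h0 i = -1, w i := by
    rw [sum_filter, mul_sum, ← sum_sub_distrib]
    refine sum_congr rfl fun i _ ↦ ?_
    rcases hh0 i with hi | hi <;> norm_num [hi]
    ring
  have hw0 : 0 ≤ ∑ i, w i := sum_nonneg fun i _ ↦ hw i
  have hθw : θ * ∑ i, w i ≤ 1 / 8 * ∑ i, w i := by gcongr
  have hwpos : 0 < ∑ i, w i := by
    refine hw0.lt_of_ne fun hzero ↦ ?_
    have hall := (sum_eq_zero_iff_of_nonneg fun i _ ↦ hw i).1 hzero.symm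
    simp [hall] at h
  refine le_trans ?_ (exp_neg_max_div_le_uniformProb hθ hθ8 hwpos (S := {i | h0 i = -1})
    (by linarith))
  unfold advantageProb
  gcongr
  have hθsq : 64 * θ ^ 2 ≤ 1 := by
    calc 64 * θ ^ 2 ≤ 64 * (1 / 8) ^ 2 := by gcongr
      _ = 1 := by norm_num
  refine max_le (le_add_of_nonneg_right (by positivity)) ?_
  calc 64 * θ ^ 2 * (#{i | h0 i = -1} : ℝ) ≤ 64 * θ ^ 2 * (r + 1) := by gcongr
    _ ≤ 1 + 64 * θ ^ 2 * r := by linarith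

lemma uniformProb_forall_hypothesisSet_lt_le {h0 w : ι → ℝ} {θ r : ℝ}
    (hh0 : ∀ i, h0 i = 1 ∨ h0 i = -1) (hr : 0 ≤ r) (hcard : (#{i | h0 i = -1} : ℝ) ≤ r + 1)
    (hθ : 0 < θ) (hθ8 : θ ≤ 1 / 8) (hw : ∀ i, 0 ≤ w i) :
    uniformProb {x : T → ι → Bool | ∀ f ∈ hypothesisSet h0 x,
      ∑ i, w i * f i < θ * ∑ i, w i} ≤
      Real.exp (-(advantageProb θ r * Fintype.card T)) := by
  by_cases h : ∑ i, w i * h0 i < θ * ∑ i, w i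
  · set E : Set (ι → Bool) := {b | θ * ∑ i, w i ≤ rademacherSum w b}
    have hsub : {x : T → ι → Bool | ∀ f ∈ hypothesisSet h0 x, ∑ i, w i * f i < θ * ∑ i, w i} ⊆
        Set.univ.pi fun _ : T ↦ Eᶜ :=
      fun x hx t _ ↦ not_le.2 (hx _ (Or.inr ⟨t, rfl⟩))
    calc _ ≤ uniformProb (Set.univ.pi fun _ : T ↦ Eᶜ) := uniformProb_mono hsub
      _ = (1 - uniformProb E) ^ Fintype.card T := by
          rw [uniformProb_pi, prod_const, card_univ, uniformProb_compl]
      _ ≤ Real.exp (-advantageProb θ r) ^ Fintype.card T := by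
          gcongr
          · exact sub_nonneg.2 (uniformProb_le_one E)
          · refine le_trans ?_ (Real.one_sub_le_exp_neg _)
            gcongr
            exact advantageProb_le_uniformProb hh0 hr hcard hθ hθ8 hw h
      _ = Real.exp (-(advantageProb θ r * Fintype.card T)) := by
          rw [← Real.exp_nat_mul, mul_neg, mul_comm]
  · have hempty : {x : T → ι → Bool | ∀ f ∈ hypothesisSet h0 x,
        ∑ i, w i * f i < θ * ∑ i, w i} = ∅ :=
      Set.eq_empty_of_forall_notMem fun x hx ↦ h (hx h0 (Set.mem_insert _ _))
    rw [hempty]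
    simpa [uniformProb] using (Real.exp_pos _).le

lemma uniformProb_not_hasAdvantage_le {h0 : ι → ℝ} {γ θ r : ℝ} {K L : ℕ}
    (hh0 : ∀ i, h0 i = 1 ∨ h0 i = -1) (hr : 0 ≤ r) (hcard : (#{i | h0 i = -1} : ℝ) ≤ r + 1)
    (hγ : 0 < γ) (hγ1 : γ ≤ 1) (hθ : 0 < θ) (hθ8 : θ ≤ 1 / 8) (hK : 0 < K)
    (hlog : Real.log (Fintype.card ι) ≤ K * γ ^ 2) (hT : Fintype.card T = K * L) :
    uniformProb {g : T → ι → Bool | ¬ HasAdvantage (hypothesisSet h0 g) (θ - 2 * γ)} ≤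
      K * Real.exp (-(advantageProb θ r * L)) := by
  let block : (T → ι → Bool) ≃ (Fin K → Fin L → ι → Bool) :=
    (Equiv.arrowCongr (Fintype.equivOfCardEq (by simpa using hT)) (Equiv.refl _)).trans
      (Equiv.curry (Fin K) (Fin L) (ι → Bool))
  have hsub (g : T → ι → Bool) (j : Fin K) :
      hypothesisSet h0 (block g j) ⊆ hypothesisSet h0 g :=
    hypothesisSet_comp_subset h0 g _
  have hstep (w : ι → ℝ) (hw : ∀ i, 0 ≤ w i) :
      uniformProb {x : Fin L → ι → Bool | ∀ f ∈ hypothesisSet h0 x,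
        (∑ i, w i) * Real.exp (-(γ * (θ - γ))) < ∑ i, w i * Real.exp (-γ * f i)} ≤
        Real.exp (-(advantageProb θ r * L)) := by
    have hweak := uniformProb_forall_hypothesisSet_lt_le (T := Fin L) hh0 hr hcard hθ hθ8 hw
    rw [Fintype.card_fin] at hweak
    refine le_trans (uniformProb_mono ?_) hweak
    exact fun x hx f hf ↦ lt_of_not_ge fun hle ↦ (hx f hf).not_ge <|
      sum_mul_exp_neg_mul_le hw (abs_le_one_of_mem_hypothesisSet hh0 hf) hγ.le hγ1 hle
  have hboost := uniformProb_forall_lt_sum_exp_le (Real.exp_pos _).le hstep K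
    (w := 1) fun _ ↦ zero_le_one
  rw [← uniformProb_preimage_equiv block] at hboost
  refine le_trans (uniformProb_mono ?_) hboost
  refine fun g hg s hs ↦ lt_of_not_ge fun hle ↦ hg ?_
  exact hasAdvantage_of_sum_exp_le hK hγ hlog (fun j ↦ hsub g j (hs j)) (by simpa using hle)

end RandomHypotheses
section Quantitative

open Finset

lemma exp_neg_div_le_advantageProb (γ r : ℝ) :
    Real.exp (-(324 * γ ^ 2 * r)) / 196 ≤ advantageProb (9 / 4 * γ) r := by
  have hexp : advantageProb (9 / 4 * γ) r =
      Real.exp (-(324 * γ ^ 2 * r)) / (64 * Real.exp 1) := by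
    rw [advantageProb, neg_add, Real.exp_add, Real.exp_neg 1]
    ring_nf
  rw [hexp]
  gcongr
  linarith [Real.exp_one_lt_d9]

lemma natCeil_mul_exp_neg_le {k δ x : ℝ} (hk : 2 ≤ k) (hδ : 0 < δ) (hδ1 : δ ≤ 1)
    (hx : 2 * Real.log (k / δ) ≤ x) : ⌈k⌉₊ * Real.exp (-x) ≤ δ := by
  have hk0 : 0 < k := by linarith
  have hexp : Real.exp (-x) ≤ (δ / k) ^ 2 := by
    calc Real.exp (-x) ≤ Real.exp ((2 : ℕ) * Real.log (δ / k)) := by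
          rw [← inv_div k δ, Real.log_inv]
          gcongr
          push_cast
          linarith
      _ = (δ / k) ^ 2 := by rw [Real.exp_nat_mul, Real.exp_log (by positivity)]
  calc ⌈k⌉₊ * Real.exp (-x) ≤ (k + 1) * (δ / k) ^ 2 := by
        gcongr
        exact (Nat.ceil_lt_add_one hk0.le).le
    _ = δ * (δ * ((k + 1) / k ^ 2)) := by ring
    _ ≤ δ * (1 * 1) := by
        gcongr
        rw [div_le_one (by positivity)]
        nlinarith
    _ = δ := by ring

lemma natCeil_mul_exp_neg_advantageProb_le {k N γ δ r : ℝ} (hk : 2 ≤ k) (hδ : 0 < δ)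
    (hδ1 : δ ≤ 1) (hN : N = 392 * k * Real.log (k / δ) * Real.exp (324 * γ ^ 2 * r)) :
    ⌈k⌉₊ * Real.exp (-(advantageProb (9 / 4 * γ) r * ⌈N / k⌉₊)) ≤ δ := by
  refine natCeil_mul_exp_neg_le hk hδ hδ1 ?_
  calc 2 * Real.log (k / δ) = Real.exp (-(324 * γ ^ 2 * r)) / 196 * (N / k) := by
        rw [hN, Real.exp_neg]
        field_simp
        ring
    _ ≤ Real.exp (-(324 * γ ^ 2 * r)) / 196 * ⌈N / k⌉₊ := by
        gcongr
        exact Nat.le_ceil _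
    _ ≤ advantageProb (9 / 4 * γ) r * ⌈N / k⌉₊ := by
        gcongr
        exact exp_neg_div_le_advantageProb γ r

lemma two_le_log_mul_inv_sq {n : ℕ} {γ : ℝ} (hn : 2 ≤ n) (hγ : 0 < γ) (hγ2 : γ ≤ 1 / 2) :
    2 ≤ Real.log n * (γ ^ 2)⁻¹ := by
  have hlog : Real.log 2 ≤ Real.log n := Real.log_le_log two_pos (by exact_mod_cast hn)
  rw [← div_eq_mul_inv, le_div_iff₀ (by positivity)]
  nlinarith [Real.log_two_gt_d9]

lemma card_filter_ite_eq_neg_one_le {n : ℕ} {r : ℝ} (hr : 0 ≤ r) :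
    (#{i : Fin n | (if ((i : ℕ) + 1 : ℝ) ≤ n - r then 1 else -1 : ℝ) = -1} : ℝ) ≤ r + 1 := by
  refine le_trans ?_ (Nat.ceil_lt_add_one hr).le
  rw [← card_range ⌈r⌉₊, Nat.cast_le]
  refine card_le_card_of_injOn (fun i ↦ (i.rev : ℕ)) (fun i hi ↦ ?_)
    (Fin.val_injective.comp Fin.rev_injective).injOn
  have hlt : (n : ℝ) - r < i + 1 := by
    by_contra! hle
    rw [mem_coe, mem_filter, if_pos hle] at hi
    norm_num at hi
  have hrev : (i.rev : ℝ) + (i + 1) = n := by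
    rw [Fin.val_rev]
    exact_mod_cast Nat.sub_add_cancel i.2
  simp only [coe_range, Set.mem_Iio, Nat.lt_ceil]
  linarith

end Quantitative

theorem adaboost_weak_learner_hypothesis_set_general {ι T : Type*} [Fintype ι] [DecidableEq ι]
    [Nontrivial ι] [Fintype T] [DecidableEq T] {h0 : ι → ℝ} {r γ δ k N : ℝ}
    (hh0 : ∀ i, h0 i = 1 ∨ h0 i = -1) (hr : 0 ≤ r)
    (hcard : (Finset.card {i | h0 i = -1} : ℝ) ≤ r + 1) (hδ : 0 < δ) (hδ1 : δ ≤ 1) (hγ : 0 < γ)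
    (hγ18 : γ ≤ 1 / 18) (hk : k = Real.log (Fintype.card ι) * (γ ^ 2)⁻¹)
    (hN : N = 392 * k * Real.log (k / δ) * Real.exp (324 * γ ^ 2 * r))
    (hT : Fintype.card T = ⌈k⌉₊ * ⌈N / k⌉₊) :
    ENNReal.ofReal (1 - δ) ≤ (PMF.uniformOfFintype (T → ι → Bool)).toMeasure
      {g | HasAdvantage (hypothesisSet h0 g) (γ / 4)} := by
  have hk2 : 2 ≤ k := hk ▸ two_le_log_mul_inv_sq Fintype.one_lt_card hγ (by linarith)
  have hlog : Real.log (Fintype.card ι) ≤ ⌈k⌉₊ * γ ^ 2 := by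
    rw [← mul_inv_le_iff₀ (by positivity), ← hk]
    exact Nat.le_ceil k
  have hfail := (uniformProb_not_hasAdvantage_le hh0 hr hcard hγ (by linarith)
    (show 0 < 9 / 4 * γ by positivity) (by linarith) (Nat.ceil_pos.2 (by linarith)) hlog hT).trans
    (natCeil_mul_exp_neg_advantageProb_le hk2 hδ hδ1 hN)
  rw [show 9 / 4 * γ - 2 * γ = γ / 4 by ring, ← Set.compl_ofPred, uniformProb_compl] at hfail
  rw [toMeasure_uniformOfFintype_eq_ofReal]
  exact ENNReal.ofReal_le_ofReal (by linarith)

open scoped Classical in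
/-- A random hypothesis set `H` consisting of `h₀` together with
`k·⌈N/k⌉` i.i.d. uniform vectors in `{-1,1}^u` is, with probability at least `1 - δ`,
a weak-learner hypothesis set: for every distribution `D` on `{1,…,u}` some `h ∈ H`
has advantage at least `γ/4` under `D`. -/
theorem adaboost_weak_learner_hypothesis_set :
    ∃ c0 c1 c2 : ℝ, 0 < c0 ∧ c0 ≤ 1 ∧ 0 < c1 ∧ c1 ≤ 1 ∧ 1 ≤ c2 ∧
      ∀ (u : ℕ), 2 ≤ u → ∀ r r1 α γ δ : ℝ,
        0 ≤ r → 0 ≤ r1 → 1 ≤ α → r1 = α ^ 2 * r → r1 ≤ (u : ℝ) →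
        0 < δ → δ ≤ 1 → 0 < γ → γ < 1 / 4 → γ ≤ c0 / (2 * α) →
        ∀ k N : ℝ, k = Real.log u * (γ ^ 2)⁻¹ →
          N = 2 * (c1 ^ 2)⁻¹ * k * Real.log (k / δ) * Real.exp (8 * c2 * γ ^ 2 * r1) →
        ∀ M : ℕ, M = ⌈k⌉₊ * ⌈N / k⌉₊ →
        ∀ h0 : Fin u → ℝ,
          h0 = (fun (i : Fin u) => if ((i : ℕ) + 1 : ℝ) ≤ (u : ℝ) - r1 then 1 else -1) →
        ENNReal.ofReal (1 - δ) ≤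
          (PMF.uniformOfFintype (Fin M → Fin u → Bool)).toMeasure
            {g | ∀ H : Set (Fin u → ℝ),
              H = insert h0 {f | ∃ t : Fin M, f = fun i => boolSign (g t i)} →
              ∀ D : Fin u → ℝ, (∀ i, 0 ≤ D i) → ∑ i, D i = 1 →
                ∃ f ∈ H, γ / 4 ≤ ∑ i, D i * f i} := by
  refine ⟨1 / 9, 1 / 14, 81 / 2, by norm_num, by norm_num, by norm_num, by norm_num, by norm_num,
    fun u hu r r1 α γ δ _ hr1 hα _ _ hδ hδ1 hγ _ hγα k N hk hN M hM h0 hh0 ↦ ?_⟩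
  have : Nontrivial (Fin u) := Fin.nontrivial_iff_two_le.2 hu
  have hγ18 : γ ≤ 1 / 18 := hγα.trans (by rw [div_le_iff₀ (by positivity)]; linarith)
  have hsign (i : Fin u) : h0 i = 1 ∨ h0 i = -1 := hh0 ▸ ite_eq_or_eq _ _ _
  have hcard : (Finset.card {i | h0 i = -1} : ℝ) ≤ r1 + 1 := by
    simpa only [hh0] using card_filter_ite_eq_neg_one_le hr1
  refine (adaboost_weak_learner_hypothesis_set_general (N := N) hsign hr1 hcard hδ hδ1 hγ
    hγ18 (by simpa using hk) (by norm_num [hN]) (by simpa using hM)).trans (measure_mono ?_)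
  rintro g hg H rfl
  exact hg
end

section
/- Let S be a nonempty finite set, D a probability distribution on S, h: S → {−1,1} a function, and 0 < γ < 1/2 a real. Set η = (1/2)·ln((1+2γ)/(1−2γ)). If ∑_{i ∈ S} D(i)·h(i) ≥ 2γ, then ∑_{i ∈ S} D(i)·exp(−η·h(i)) ≤ 1 − 2γ². -/
/-!
Since `exp` is convex, on `[-1, 1]` the function `y ↦ exp (t * y)` lies below its chord
`y ↦ cosh t + y * sinh t`, so averaging reduces the sum to its total weight and its correlation.
The learning rate is `η = artanh (2 * γ)`, the value minimizing the resulting bound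
`cosh η - 2 * γ * sinh η`; the minimum is `√(1 - (2 * γ) ^ 2) ≤ 1 - 2 * γ ^ 2`.
-/

open Real

lemma cosh_artanh_sub_mul_sinh_artanh {x : ℝ} (hx : x ∈ Set.Ioo (-1) 1) :
    cosh (artanh x) - x * sinh (artanh x) = √(1 - x ^ 2) := by
  calc cosh (artanh x) - x * sinh (artanh x)
    _ = (1 - x ^ 2) / √(1 - x ^ 2) := by rw [cosh_artanh hx, sinh_artanh hx]; ring
    _ = √(1 - x ^ 2) := div_sqrt

section WeightedSums

variable {ι : Type*} {S : Finset ι} {w f : ι → ℝ}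

lemma sum_mul_exp_mul_le_cosh_add_sinh (hw : ∀ i ∈ S, 0 ≤ w i) (hf : ∀ i ∈ S, |f i| ≤ 1) (t : ℝ) :
    ∑ i ∈ S, w i * exp (t * f i) ≤ cosh t * ∑ i ∈ S, w i + sinh t * ∑ i ∈ S, w i * f i := by
  have chord_bound (i : ι) (hi : i ∈ S) : exp (t * f i) ≤ cosh t + f i * sinh t := by
    simpa only [mul_comm t] using exp_mul_le_cosh_add_mul_sinh (hf i hi) t
  calc ∑ i ∈ S, w i * exp (t * f i)
    _ ≤ ∑ i ∈ S, w i * (cosh t + f i * sinh t) :=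
      Finset.sum_le_sum fun i hi ↦ mul_le_mul_of_nonneg_left (chord_bound i hi) (hw i hi)
    _ = cosh t * ∑ i ∈ S, w i + sinh t * ∑ i ∈ S, w i * f i := by
      simp only [Finset.mul_sum, ← Finset.sum_add_distrib]
      exact Finset.sum_congr rfl fun i _ ↦ by ring

lemma sum_mul_exp_neg_artanh_mul_le_sqrt (hw : ∀ i ∈ S, 0 ≤ w i) (hf : ∀ i ∈ S, |f i| ≤ 1)
    {x : ℝ} (hx : x ∈ Set.Ico 0 1) (hcorr : x * ∑ i ∈ S, w i ≤ ∑ i ∈ S, w i * f i) :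
    ∑ i ∈ S, w i * exp (-artanh x * f i) ≤ √(1 - x ^ 2) * ∑ i ∈ S, w i := by
  have sinh_artanh_nonneg : 0 ≤ sinh (artanh x) := sinh_nonneg_iff.mpr (artanh_nonneg hx.1)
  calc ∑ i ∈ S, w i * exp (-artanh x * f i)
    _ ≤ cosh (artanh x) * ∑ i ∈ S, w i - sinh (artanh x) * ∑ i ∈ S, w i * f i := by
      simpa only [cosh_neg, sinh_neg, neg_mul, ← sub_eq_add_neg] using
        sum_mul_exp_mul_le_cosh_add_sinh hw hf (-artanh x)
    _ ≤ cosh (artanh x) * ∑ i ∈ S, w i - sinh (artanh x) * (x * ∑ i ∈ S, w i) := by gcongr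
    _ = (cosh (artanh x) - x * sinh (artanh x)) * ∑ i ∈ S, w i := by ring
    _ = √(1 - x ^ 2) * ∑ i ∈ S, w i := by
      rw [cosh_artanh_sub_mul_sinh_artanh ⟨by linarith [hx.1], hx.2⟩]

end WeightedSums

theorem adaboost_normalization_bound_general
    {ι : Type*} (S : Finset ι) (D : ι → ℝ) (hD0 : ∀ i ∈ S, 0 ≤ D i) (hDsum : ∑ i ∈ S, D i = 1)
    (h : ι → ℝ) (hh : ∀ i ∈ S, |h i| ≤ 1)
    (γ : ℝ) (hγ0 : 0 ≤ γ) (hγ : γ < 1 / 2)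
    (η : ℝ) (hη : η = 1 / 2 * Real.log ((1 + 2 * γ) / (1 - 2 * γ)))
    (hadv : 2 * γ ≤ ∑ i ∈ S, D i * h i) :
    ∑ i ∈ S, D i * Real.exp (-η * h i) ≤ 1 - 2 * γ ^ 2 := by
  have η_eq_artanh : η = artanh (2 * γ) := by
    rw [hη, artanh_eq_half_log ⟨by linarith, by linarith⟩]
  calc ∑ i ∈ S, D i * exp (-η * h i)
    _ ≤ √(1 - (2 * γ) ^ 2) := by
      simpa only [η_eq_artanh, hDsum, mul_one] using sum_mul_exp_neg_artanh_mul_le_sqrt hD0 hh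
        (x := 2 * γ) ⟨by linarith, by linarith⟩ (by rwa [hDsum, mul_one])
    _ ≤ 1 + -(2 * γ) ^ 2 / 2 := sqrt_one_add_le (by nlinarith)
    _ = 1 - 2 * γ ^ 2 := by ring

/-- Normalization-factor bound for one round of the AdaBoost-style
multiplicative weights update: if `h` has advantage `2γ` under `D`, then the
normalization factor `∑ D(i)·exp(−η·h(i))` is at most `1 − 2γ²`. -/
theorem adaboost_normalization_bound
    {ι : Type*} (S : Finset ι) (hS : S.Nonempty)
    (D : ι → ℝ) (hD0 : ∀ i ∈ S, 0 ≤ D i) (hD1 : ∀ i ∈ S, D i ≤ 1)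
    (hDsum : ∑ i ∈ S, D i = 1)
    (h : ι → ℝ) (hh : ∀ i ∈ S, h i = 1 ∨ h i = -1)
    (γ : ℝ) (hγ0 : 0 < γ) (hγ : γ < 1 / 2)
    (η : ℝ) (hη : η = 1 / 2 * Real.log ((1 + 2 * γ) / (1 - 2 * γ)))
    (hadv : 2 * γ ≤ ∑ i ∈ S, D i * h i) :
    ∑ i ∈ S, D i * Real.exp (-η * h i) ≤ 1 - 2 * γ ^ 2 :=
  adaboost_normalization_bound_general S D hD0 hDsum h
    (fun i hi ↦ by rcases hh i hi with hi | hi <;> simp [hi]) γ hγ0.le hγ η hη hadv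
end
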